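/- arXiv:math-ph/0102029 — 2 statements merged into one kernel-verified Lean document; each statement's English description precedes it below -/
import Mathlib

section
/- Let q1 and q2 be continuous real-valued potentials on [0,1] such that q1(x) = q2(x) for all x ∈ [1/2,1]. If q1 and q2 have the same set of Dirichlet eigenvalues, then q1 = q2 on all of [0,1]. -/
/-- `lam` is a Dirichlet eigenvalue of `q` on `[0,1]`: there is a nontrivial C²
solution of `-ψ'' + q ψ = lam ψ` with `ψ 0 = ψ 1 = 0`. -/
def IsDirichletEigenvalue (q : ℝ → ℝ) (lam : ℝ) : Prop :=
  ∃ ψ ψ' : ℝ → ℝ,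
    (∀ x ∈ Set.Icc (0:ℝ) 1, HasDerivAt ψ (ψ' x) x) ∧
    (∀ x ∈ Set.Icc (0:ℝ) 1, HasDerivAt ψ' (q x * ψ x - lam * ψ x) x) ∧
    (∃ x ∈ Set.Icc (0:ℝ) 1, ψ x ≠ 0) ∧ ψ 0 = 0 ∧ ψ 1 = 0

/-!
Let `s (lam, ·)` solve the equation with `s (lam, 0) = 0`, `s' (lam, 0) = 1`. The eigenvalues are
the zeros of `D lam = s₁ (lam, 1)`; this is an entire function whose zeros are real and simple. At
an eigenvalue `s₁` and `s₂` both vanish at `1`, and they solve the same equation on `[1/2, 1]`, so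
their Wronskian `W lam` at `1/2` vanishes there and `W / D` is entire. For `lam = k ^ 2`, Green's
formula on `[0, 1/2]` gives `W = O(exp |im k| / |k| ^ 2)`, whereas `|D| ≥ exp |im k| / (16 |k|)`
on the circles `|k| = (n + 1/2) π`. Hence `W / D = 0` and `W = 0`: the potentials have the same
Weyl function `s' / s` at `1/2`.

That determines the potential on `[0, 1/2]`. Let `c, t` be the solutions with data `(1, 0)`,
`(0, 1)` at the endpoint `1/2`, as functions of the distance `y` to it. As
`s (1/2 - y) = s (1/2) c - s' (1/2) t`, the combination `c₁ t₂ - t₁ c₂` is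
`s₁ (1/2 - y) t₂ / s₁ (1/2) - s₂ (1/2 - y) t₁ / s₂ (1/2) = O(1 / |k|)` on large circles, hence
zero. Then `(c₁ / t₁)' = (c₂ / t₂)'`, i.e. `t₁² = t₂²`, and differentiating twice gives
`q₁ = q₂`.
-/

namespace HochstadtLieberman

open Set Filter Topology Bornology ComplexConjugate

section LinearODE

theorem isUnit_one_sub_of_norm_pow_lt_one {R : Type*} [NormedRing R] [HasSummableGeomSeries R]
    {x : R} {n : ℕ} (hx : ‖x ^ n‖ < 1) : IsUnit (1 - x) := by
  have hu : IsUnit ((1 - x) * ∑ i ∈ Finset.range n, x ^ i) := by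
    rw [mul_neg_geom_sum]
    exact isUnit_one_sub_of_norm_lt_one hx
  refine ((Commute.isUnit_mul_iff ?_).1 hu).1
  rw [commute_iff_eq, mul_neg_geom_sum, geom_sum_mul_neg]

theorem differentiable_ringInverse_one_sub_apply {E F : Type*} [NormedAddCommGroup E]
    [NormedSpace ℂ E] [NormedAddCommGroup F] [NormedSpace ℂ F] [CompleteSpace F]
    {T : E →L[ℂ] F →L[ℂ] F} (hT : ∀ A, IsUnit (1 - T A)) (x : F) :
    Differentiable ℂ fun A => Ring.inverse (1 - T A) x := fun A =>
  have hsub : DifferentiableAt ℂ (fun A => 1 - T A) A := by fun_prop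
  (DifferentiableAt.comp (g := Ring.inverse) A (differentiableAt_inverse (𝕜 := ℂ) (hT A))
    hsub).clm_apply (differentiableAt_const x)

variable {R : Type*} [NormedRing R] [NormedAlgebra ℂ R] [CompleteSpace R] {a b : ℝ}

theorem hasDerivAt_integral_IccExtend (hab : a ≤ b) (u : C(Icc a b, R)) (x : ℝ) :
    HasDerivAt (fun y => ∫ t in a..y, IccExtend hab u t) (IccExtend hab u x) x :=
  (u.continuous.Icc_extend'.integral_hasStrictDerivAt a x).hasDerivAt

/-- The Volterra operator `u ↦ ∫ t in a..x, u t` on the continuous functions on `[a, b]`. -/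
noncomputable def volterra (hab : a ≤ b) : C(Icc a b, R) →L[ℂ] C(Icc a b, R) :=
  LinearMap.mkContinuous
    { toFun := fun u =>
        ⟨fun x => ∫ t in a..x, IccExtend hab u t,
          (Differentiable.continuous fun x =>
            (hasDerivAt_integral_IccExtend hab u x).differentiableAt).comp continuous_subtype_val⟩
      map_add' := fun u v => by
        ext x
        exact intervalIntegral.integral_add (u.continuous.Icc_extend'.intervalIntegrable _ _)
          (v.continuous.Icc_extend'.intervalIntegrable _ _)
      map_smul' := fun c u => by
        ext x
        exact intervalIntegral.integral_smul c (IccExtend hab u) }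
    (b - a) fun u => by
      refine (ContinuousMap.norm_le _ (mul_nonneg (sub_nonneg.2 hab) (norm_nonneg u))).2
        fun x => ?_
      calc _ ≤ ‖u‖ * |x - a| := intervalIntegral.norm_integral_le_of_norm_le_const
            fun t _ => u.norm_coe_le_norm _
        _ ≤ (b - a) * ‖u‖ := by
          rw [abs_of_nonneg (sub_nonneg.2 x.2.1), mul_comm]
          gcongr
          exact x.2.2

theorem volterra_apply (hab : a ≤ b) (u : C(Icc a b, R)) (x : Icc a b) :
    volterra hab u x = ∫ t in a..x, IccExtend hab u t := rfl

theorem norm_volterra_apply_le (hab : a ≤ b) {u : C(Icc a b, R)} {C : ℝ} {n : ℕ}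
    (hu : ∀ x, ‖u x‖ ≤ C * (x - a) ^ n) (x : Icc a b) :
    ‖volterra hab u x‖ ≤ C / (n + 1) * (x - a) ^ (n + 1) := by
  have hbound : ∀ t ∈ Ioc a (x : ℝ), ‖IccExtend hab u t‖ ≤ C * (t - a) ^ n := fun t ht => by
    rw [IccExtend_of_mem hab u ⟨ht.1.le, ht.2.trans x.2.2⟩]
    exact hu _
  calc ‖volterra hab u x‖ ≤ ∫ t in a..x, C * (t - a) ^ n :=
        intervalIntegral.norm_integral_le_of_norm_le x.2.1 (.of_forall hbound)
          (Continuous.intervalIntegrable (by fun_prop) _ _)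
    _ = C / (n + 1) * (x - a) ^ (n + 1) := by
      rw [intervalIntegral.integral_const_mul,
        intervalIntegral.integral_comp_sub_right (fun t => t ^ n), integral_pow, sub_self,
        zero_pow n.succ_ne_zero, sub_zero]
      ring

/-- The operator `u ↦ ∫ t in a..x, A t * u t`: the solutions of `u' = A u` with `u a = u₀` are
those of the integral equation `(1 - volterraMul hab A) u = u₀`. -/
noncomputable def volterraMul (hab : a ≤ b) :
    C(Icc a b, R) →L[ℂ] C(Icc a b, R) →L[ℂ] C(Icc a b, R) :=
  ContinuousLinearMap.compL ℂ _ _ _ (volterra hab) ∘L ContinuousLinearMap.mul ℂ C(Icc a b, R)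

theorem volterraMul_apply (hab : a ≤ b) (A u : C(Icc a b, R)) :
    volterraMul hab A u = volterra hab (A * u) := rfl

theorem norm_volterraMul_pow_apply_le (hab : a ≤ b) (A u : C(Icc a b, R)) (n : ℕ) (x : Icc a b) :
    ‖(volterraMul hab A ^ n) u x‖ ≤ ‖A‖ ^ n * ‖u‖ / n.factorial * (x - a) ^ n := by
  induction n generalizing x with
  | zero => simpa using u.norm_coe_le_norm x
  | succ n ih =>
    have hmul (y : Icc a b) : ‖(A * (volterraMul hab A ^ n) u) y‖ ≤
        ‖A‖ * (‖A‖ ^ n * ‖u‖ / n.factorial) * (y - a) ^ n := by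
      rw [ContinuousMap.mul_apply, mul_assoc]
      exact (norm_mul_le _ _).trans
        (mul_le_mul (A.norm_coe_le_norm y) (ih y) (norm_nonneg _) (norm_nonneg _))
    rw [pow_succ', mul_apply_eq_comp, volterraMul_apply]
    refine (norm_volterra_apply_le hab hmul x).trans_eq ?_
    rw [Nat.factorial_succ]
    push_cast
    field_simp
    ring

theorem isUnit_one_sub_volterraMul (hab : a ≤ b) (A : C(Icc a b, R)) :
    IsUnit (1 - volterraMul hab A) := by
  obtain ⟨n, hn⟩ := ((FloorSemiring.tendsto_pow_div_factorial_atTop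
    (‖A‖ * (b - a))).eventually_lt_const one_pos).exists
  have : 0 ≤ b - a := sub_nonneg.2 hab
  suffices ‖volterraMul hab A ^ n‖ ≤ (‖A‖ * (b - a)) ^ n / n.factorial from
    isUnit_one_sub_of_norm_pow_lt_one (R := C(Icc a b, R) →L[ℂ] C(Icc a b, R)) (this.trans_lt hn)
  refine ContinuousLinearMap.opNorm_le_bound _ (by positivity) fun u =>
    (ContinuousMap.norm_le _ (by positivity)).2 fun x => ?_
  have hx : 0 ≤ (x : ℝ) - a := sub_nonneg.2 x.2.1
  calc _ ≤ ‖A‖ ^ n * ‖u‖ / n.factorial * (x - a) ^ n := norm_volterraMul_pow_apply_le hab A u n x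
    _ ≤ ‖A‖ ^ n * ‖u‖ / n.factorial * (b - a) ^ n := by gcongr; exact x.2.2
    _ = (‖A‖ * (b - a)) ^ n / n.factorial * ‖u‖ := by rw [mul_pow]; ring

/-- The fundamental solution of `Y' = A Y` on `[a, b]` with `Y a = 1`, where `A` takes values in a
Banach algebra. -/
noncomputable def propagator (hab : a ≤ b) (A : C(Icc a b, R)) : C(Icc a b, R) :=
  Ring.inverse (1 - volterraMul hab A) 1

theorem propagator_eq (hab : a ≤ b) (A : C(Icc a b, R)) :
    propagator hab A = 1 + volterra hab (A * propagator hab A) := by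
  have h : (1 - volterraMul hab A) (propagator hab A) = 1 :=
    DFunLike.congr_fun (Ring.mul_inverse_cancel _ (isUnit_one_sub_volterraMul hab A)) 1
  rwa [sub_apply, one_apply_eq_self, sub_eq_iff_eq_add] at h

theorem differentiable_propagator (hab : a ≤ b) :
    Differentiable ℂ (propagator hab : C(Icc a b, R) → C(Icc a b, R)) :=
  differentiable_ringInverse_one_sub_apply (E := C(Icc a b, R)) (F := C(Icc a b, R))
    (T := volterraMul hab) (isUnit_one_sub_volterraMul hab) 1

theorem exists_entire_fundamental_solution (hab : a ≤ b) (A B : C(Icc a b, R)) :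
    ∃ Y : ℂ → ℝ → R, (∀ z, Y z a = 1) ∧
      (∀ z (x : Icc a b), HasDerivAt (Y z) ((A x + z • B x) * Y z x) x) ∧
      (∀ x : Icc a b, Differentiable ℂ fun z => Y z x) ∧ Continuous (Function.uncurry Y) := by
  have hAB : Differentiable ℂ fun z : ℂ => A + z • B := by fun_prop
  have hP : Differentiable ℂ fun z : ℂ => propagator hab (A + z • B) := fun z =>
    DifferentiableAt.comp (g := propagator hab) z (differentiable_propagator hab _) (hAB z)
  set G : ℂ → C(Icc a b, R) := fun z => (A + z • B) * propagator hab (A + z • B)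
  have hG : Continuous G := hAB.continuous.mul hP.continuous
  have hG_extend : Continuous (Function.uncurry fun z t => IccExtend hab (G z) t) :=
    (hG.comp continuous_fst).eval (continuous_projIcc.comp continuous_snd)
  set Y : ℂ → ℝ → R := fun z x => 1 + ∫ t in a..x, IccExtend hab (G z) t
  have hY (z : ℂ) (x : Icc a b) : Y z x = propagator hab (A + z • B) x := by
    rw [propagator_eq, ContinuousMap.add_apply, volterra_apply, ContinuousMap.one_apply]
  refine ⟨Y, fun z => by simp [Y], fun z x => ?_, fun x => ?_, continuous_const.add
    (intervalIntegral.continuous_parametric_primitive_of_continuous hG_extend)⟩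
  · have hGx : IccExtend hab (G z) x = (A x + z • B x) * Y z x := by
      rw [IccExtend_val, hY]
      rfl
    exact hGx ▸ (hasDerivAt_integral_IccExtend hab (G z) x).const_add 1
  · simp_rw [hY]
    exact (ContinuousMap.evalCLM ℂ x).differentiable.comp hP

end LinearODE

section Solutions

variable {q r : ℝ → ℂ} {lam mu : ℂ} {S : Set ℝ} {U V : ℝ → ℂ × ℂ} {a b : ℝ} {v : ℂ × ℂ}

/-- `U = (u, u')` where `u` solves `-u'' + q u = lam u` on `S`. The derivatives are two-sided even
at boundary points of `S`, as in `IsDirichletEigenvalue`. -/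
def IsSchrodingerSolution (q : ℝ → ℂ) (lam : ℂ) (S : Set ℝ) (U : ℝ → ℂ × ℂ) : Prop :=
  ∀ x ∈ S, HasDerivAt U ((U x).2, (q x - lam) * (U x).1) x

namespace IsSchrodingerSolution

theorem mono {T : Set ℝ} (hU : IsSchrodingerSolution q lam T U) (hST : S ⊆ T) :
    IsSchrodingerSolution q lam S U :=
  fun x hx => hU x (hST hx)

theorem congr (hU : IsSchrodingerSolution q lam S U) (hqr : EqOn q r S) :
    IsSchrodingerSolution r lam S U :=
  fun x hx => hqr hx ▸ hU x hx

theorem continuousOn (hU : IsSchrodingerSolution q lam S U) : ContinuousOn U S :=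
  HasDerivAt.continuousOn hU

theorem hasDerivAt_fst (hU : IsSchrodingerSolution q lam S U) {x : ℝ} (hx : x ∈ S) :
    HasDerivAt (fun y => (U y).1) (U x).2 x :=
  (hU x hx).fst

theorem hasDerivAt_snd (hU : IsSchrodingerSolution q lam S U) {x : ℝ} (hx : x ∈ S) :
    HasDerivAt (fun y => (U y).2) ((q x - lam) * (U x).1) x :=
  (hU x hx).snd

theorem star (hU : IsSchrodingerSolution q lam S U) :
    IsSchrodingerSolution (fun x => conj (q x)) (conj lam) S fun x => star (U x) :=
  fun x hx => (hU x hx).star.congr_deriv <| by ext <;> simp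

theorem comp_const_sub (hU : IsSchrodingerSolution q lam S U) (c : ℝ) :
    IsSchrodingerSolution (fun y => q (c - y)) lam ((fun y => c - y) ⁻¹' S)
      fun y => ((U (c - y)).1, -(U (c - y)).2) := fun y hy => by
  have hfst := (hU.hasDerivAt_fst hy).comp_const_sub c y
  have hsnd := ((hU.hasDerivAt_snd hy).comp_const_sub c y).neg
  rw [neg_neg] at hsnd
  exact hfst.prodMk hsnd

end IsSchrodingerSolution

/-- The Wronskian `u v' - u' v` of two functions with phase-space values `(u, u')` and `(v, v')`
at a given point. -/
def wronskian (U V : ℂ × ℂ) : ℂ := U.1 * V.2 - U.2 * V.1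

theorem IsSchrodingerSolution.hasDerivAt_wronskian (hU : IsSchrodingerSolution q lam S U)
    (hV : IsSchrodingerSolution r mu S V) {x : ℝ} (hx : x ∈ S) :
    HasDerivAt (fun y => wronskian (U y) (V y))
      (((r x - mu) - (q x - lam)) * ((U x).1 * (V x).1)) x := by
  refine (((hU.hasDerivAt_fst hx).mul (hV.hasDerivAt_snd hx)).sub
    ((hU.hasDerivAt_snd hx).mul (hV.hasDerivAt_fst hx))).congr_deriv ?_
  ring

theorem integral_mul_eq_wronskian_sub (hab : a ≤ b) (hq : ContinuousOn q (Icc a b))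
    (hr : ContinuousOn r (Icc a b)) (hU : IsSchrodingerSolution q lam (Icc a b) U)
    (hV : IsSchrodingerSolution r mu (Icc a b) V) :
    ∫ x in a..b, ((r x - mu) - (q x - lam)) * ((U x).1 * (V x).1) =
      wronskian (U b) (V b) - wronskian (U a) (V a) := by
  rw [← uIcc_of_le hab] at hq hr hU hV
  have hUc := hU.continuousOn
  have hVc := hV.continuousOn
  exact intervalIntegral.integral_eq_sub_of_hasDerivAt
    (fun x hx => hU.hasDerivAt_wronskian hV hx) (ContinuousOn.intervalIntegrable (by fun_prop))

theorem wronskian_eq_left (hU : IsSchrodingerSolution q lam (Icc a b) U)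
    (hV : IsSchrodingerSolution q lam (Icc a b) V) {x : ℝ} (hx : x ∈ Icc a b) :
    wronskian (U x) (V x) = wronskian (U a) (V a) := by
  have hderiv (y : ℝ) (hy : y ∈ Icc a b) : HasDerivAt (fun y => wronskian (U y) (V y)) 0 y := by
    simpa using hU.hasDerivAt_wronskian hV hy
  exact constant_of_has_deriv_right_zero (HasDerivAt.continuousOn hderiv)
    (fun y hy => (hderiv y (Ico_subset_Icc_self hy)).hasDerivWithinAt) x hx

theorem fst_eq_add_of_fundamental_system {C S : ℝ → ℂ × ℂ}
    (hC : IsSchrodingerSolution q lam (Icc a b) C) (hCa : C a = (1, 0))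
    (hS : IsSchrodingerSolution q lam (Icc a b) S) (hSa : S a = (0, 1))
    (hU : IsSchrodingerSolution q lam (Icc a b) U) {x : ℝ} (hx : x ∈ Icc a b) :
    (U x).1 = (U a).1 * (C x).1 + (U a).2 * (S x).1 := by
  have hUS := wronskian_eq_left hU hS hx
  have hUC := wronskian_eq_left hU hC hx
  have hCS := wronskian_eq_left hC hS hx
  simp only [wronskian, hCa, hSa] at hUS hUC hCS
  linear_combination -(U x).1 * hCS + (C x).1 * hUS - (S x).1 * hUC

/-- A family `U lam` of solutions, with spectral parameter `lam`, of the Schrödinger equation on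
`[0, b]` with common initial data `v`, depending analytically on `lam`. -/
structure IsEntireSolutionFamily (q : ℝ → ℂ) (b : ℝ) (v : ℂ × ℂ) (U : ℂ → ℝ → ℂ × ℂ) : Prop where
  isSolution : ∀ lam, IsSchrodingerSolution q lam (Icc 0 b) (U lam)
  apply_zero : ∀ lam, U lam 0 = v
  differentiable : ∀ x ∈ Icc 0 b, Differentiable ℂ fun lam => U lam x
  continuous : Continuous (Function.uncurry U)

theorem IsEntireSolutionFamily.mono {U : ℂ → ℝ → ℂ × ℂ} (hU : IsEntireSolutionFamily q b v U)
    (hab : a ≤ b) : IsEntireSolutionFamily q a v U where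
  isSolution lam := (hU.isSolution lam).mono (Icc_subset_Icc_right hab)
  apply_zero := hU.apply_zero
  differentiable x hx := hU.differentiable x (Icc_subset_Icc_right hab hx)
  continuous := hU.continuous

theorem exists_isEntireSolutionFamily (hb : 0 ≤ b) (hq : ContinuousOn q (Icc 0 b)) (v : ℂ × ℂ) :
    ∃ U, IsEntireSolutionFamily q b v U := by
  set N : ℂ × ℂ →L[ℂ] ℂ × ℂ := ContinuousLinearMap.inl ℂ ℂ ℂ ∘L ContinuousLinearMap.snd ℂ ℂ ℂ
  set L : ℂ × ℂ →L[ℂ] ℂ × ℂ := ContinuousLinearMap.inr ℂ ℂ ℂ ∘L ContinuousLinearMap.fst ℂ ℂ ℂ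
  have hq' : Continuous fun x : Icc 0 b => q x := hq.domRestrict
  obtain ⟨Y, hY0, hYderiv, hYdiff, hYcont⟩ := exists_entire_fundamental_solution hb
    ⟨fun x : Icc 0 b => N + q x • L, continuous_const.add (hq'.smul continuous_const)⟩
    (.const _ (-L))
  refine ⟨fun lam x => Y lam x v, fun lam x hx => ?_, fun lam => ?_, fun x hx => ?_, ?_⟩
  · have happly := ((ContinuousLinearMap.apply ℂ (ℂ × ℂ) v).restrictScalars ℝ).hasFDerivAt
      (x := Y lam x)
    refine (happly.comp_hasDerivAt x (hYderiv lam ⟨x, hx⟩)).congr_deriv ?_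
    ext <;> simp [N, L, sub_eq_add_neg, add_mul]
  · simp [hY0]
  · exact (hYdiff ⟨x, hx⟩).clm_apply (differentiable_const v)
  · exact hYcont.clm_apply continuous_const

end Solutions

section Sine

theorem norm_sin_sq (z : ℂ) :
    ‖Complex.sin z‖ ^ 2 = Real.sin z.re ^ 2 + Real.sinh z.im ^ 2 := by
  rw [Complex.sin_eq, Complex.sq_norm, Complex.normSq_apply, ← Complex.ofReal_sin,
    ← Complex.ofReal_cos, ← Complex.ofReal_sinh, ← Complex.ofReal_cosh]
  simp only [Complex.add_re, Complex.mul_re, Complex.add_im, Complex.mul_im, Complex.ofReal_re,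
    Complex.ofReal_im, Complex.I_re, Complex.I_im]
  linear_combination Real.sin z.re ^ 2 * Real.cosh_sq z.im +
    Real.sinh z.im ^ 2 * Real.sin_sq_add_cos_sq z.re

theorem norm_sin_le_exp_abs_im (z : ℂ) : ‖Complex.sin z‖ ≤ Real.exp |z.im| := by
  have hcosh : ‖Complex.sin z‖ ≤ Real.cosh z.im := by
    refine le_of_sq_le_sq ?_ (Real.cosh_pos _).le
    rw [norm_sin_sq, Real.cosh_sq, add_comm]
    gcongr
    exact Real.sin_sq_le_one _
  have hexp : Real.exp (-|z.im|) ≤ Real.exp |z.im| := by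
    gcongr
    exact neg_le_self (abs_nonneg _)
  rw [← Real.cosh_abs, Real.cosh_eq] at hcosh
  linarith

theorem norm_sin_mul_ofReal_le (k : ℂ) {x : ℝ} (hx : 0 ≤ x) :
    ‖Complex.sin (k * x)‖ ≤ Real.exp (|k.im| * x) := by
  simpa [abs_mul, abs_of_nonneg hx] using norm_sin_le_exp_abs_im (k * x)

theorem seven_eighths_le_abs_sin_re {n : ℕ} {z : ℂ} (hz : ‖z‖ = (n + 1 / 2) * Real.pi)
    (him : |z.im| ≤ 1) : 7 / 8 ≤ |Real.sin z.re| := by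
  set d := (n + 1 / 2) * Real.pi - |z.re| with hd
  have hsq : (d + |z.re|) ^ 2 = |z.re| ^ 2 + |z.im| ^ 2 := by
    rw [hd, sub_add_cancel, ← hz, Complex.sq_norm, Complex.normSq_apply, sq_abs, sq_abs]
    ring
  have hd0 : 0 ≤ d := by
    rw [hd, ← hz]
    exact sub_nonneg.2 (Complex.abs_re_le_norm z)
  have hd1 : d ≤ 1 / 2 := by
    have hradius : 3 / 2 < d + |z.re| := by
      rw [hd, sub_add_cancel]
      nlinarith [Real.pi_gt_three, n.cast_nonneg (α := ℝ)]
    nlinarith [abs_nonneg z.re, abs_nonneg z.im]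
  have hsin : |Real.sin z.re| = |Real.cos d| := by
    have hre : |z.re| = n * Real.pi - (d - Real.pi / 2) := by
      rw [hd]
      ring
    rw [Real.abs_sin_eq_sqrt_one_sub_cos_sq, ← Real.cos_abs, hre,
      ← Real.abs_sin_eq_sqrt_one_sub_cos_sq, Real.sin_nat_mul_pi_sub, Real.sin_sub_pi_div_two]
    simp [abs_mul]
  rw [hsin]
  exact le_trans (by nlinarith) ((Real.one_sub_sq_div_two_le_cos (x := d)).trans (le_abs_self _))

theorem exp_abs_im_div_eight_le_norm_sin {n : ℕ} {z : ℂ} (hz : ‖z‖ = (n + 1 / 2) * Real.pi) :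
    Real.exp |z.im| / 8 ≤ ‖Complex.sin z‖ := by
  rcases le_total |z.im| 1 with him | him
  · have hsin : |Real.sin z.re| ≤ ‖Complex.sin z‖ := by
      refine abs_le_of_sq_le_sq ?_ (norm_nonneg _)
      rw [norm_sin_sq]
      exact le_add_of_nonneg_right (sq_nonneg _)
    have hexp : Real.exp |z.im| ≤ 3 :=
      (Real.exp_le_exp.2 him).trans (by linarith [Real.exp_one_lt_d9])
    linarith [seven_eighths_le_abs_sin_re hz him]
  · have hsinh : Real.sinh |z.im| ≤ ‖Complex.sin z‖ := by
      rw [← Real.abs_sinh]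
      refine abs_le_of_sq_le_sq ?_ (norm_nonneg _)
      rw [norm_sin_sq]
      exact le_add_of_nonneg_left (sq_nonneg _)
    have hexp_neg : Real.exp (-|z.im|) ≤ 1 := Real.exp_le_one_iff.2 (by linarith)
    rw [Real.sinh_eq] at hsinh
    linarith [Real.add_one_le_exp |z.im|]

end Sine

section Growth

variable {q : ℝ → ℂ} {b : ℝ} {k : ℂ}

theorem isSchrodingerSolution_sin (hk : k ≠ 0) (S : Set ℝ) :
    IsSchrodingerSolution (fun _ => 0) (k ^ 2) S
      fun x => (Complex.sin (k * x) / k, Complex.cos (k * x)) := fun x _ => by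
  have hlin : HasDerivAt (fun y : ℝ => k * y) k x := by
    simpa using (hasDerivAt_id x).ofReal_comp.const_mul k
  have hsin := ((Complex.hasDerivAt_sin (k * x)).comp x hlin).div_const k
  refine (hsin.prodMk ((Complex.hasDerivAt_cos (k * x)).comp x hlin)).congr_deriv ?_
  ext
  · exact mul_div_cancel_right₀ _ hk
  · field_simp
    ring

theorem duhamel_formula {U : ℝ → ℂ × ℂ} (hq : ContinuousOn q (Icc 0 b)) (hk : k ≠ 0)
    (hU : IsSchrodingerSolution q (k ^ 2) (Icc 0 b) U) {x : ℝ} (hx : x ∈ Icc 0 b) :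
    (U x).1 = (U 0).1 * Complex.cos (k * x) + (U 0).2 * (Complex.sin (k * x) / k) +
      ∫ t in (0 : ℝ)..x, q t * (Complex.sin (k * (x - t : ℝ)) / k * (U t).1) := by
  have hsub : Icc 0 x ⊆ Icc 0 b := Icc_subset_Icc_right hx.2
  have hgreen := integral_mul_eq_wronskian_sub hx.1 continuousOn_const (hq.mono hsub)
    ((isSchrodingerSolution_sin hk univ).comp_const_sub x |>.mono (subset_univ _)) (hU.mono hsub)
  simp only [sub_sub_sub_cancel_right, sub_zero] at hgreen
  rw [hgreen]
  simp only [wronskian, sub_self, Complex.ofReal_zero, mul_zero, Complex.sin_zero,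
    Complex.cos_zero, zero_div]
  ring

theorem norm_fst_sub_sin_le {U : ℝ → ℂ × ℂ} {M A : ℝ} (hq : ContinuousOn q (Icc 0 b))
    (hM : ∀ x ∈ Icc 0 b, ‖q x‖ ≤ M) (hk : k ≠ 0)
    (hU : IsSchrodingerSolution q (k ^ 2) (Icc 0 b) U) (hU0 : U 0 = (0, 1))
    (hA : ∀ x ∈ Icc 0 b, ‖(U x).1‖ ≤ A * Real.exp (|k.im| * x)) {x : ℝ} (hx : x ∈ Icc 0 b) :
    ‖(U x).1 - Complex.sin (k * x) / k‖ ≤ M * A * b / ‖k‖ * Real.exp (|k.im| * x) := by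
  have hM0 : 0 ≤ M := (norm_nonneg _).trans (hM x hx)
  have hA0 : 0 ≤ A := nonneg_of_mul_nonneg_left ((norm_nonneg _).trans (hA x hx)) (Real.exp_pos _)
  have hbound (t : ℝ) (ht : t ∈ uIoc 0 x) :
      ‖q t * (Complex.sin (k * (x - t : ℝ)) / k * (U t).1)‖ ≤
        M * A / ‖k‖ * Real.exp (|k.im| * x) := by
    rw [uIoc_of_le hx.1] at ht
    have htb : t ∈ Icc 0 b := ⟨ht.1.le, ht.2.trans hx.2⟩
    have hsin := norm_sin_mul_ofReal_le k (sub_nonneg.2 ht.2)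
    rw [norm_mul, norm_mul, norm_div]
    calc _ ≤ M * (Real.exp (|k.im| * (x - t)) / ‖k‖ * (A * Real.exp (|k.im| * t))) := by
          gcongr
          exacts [hM t htb, hA t htb]
      _ = M * A / ‖k‖ * (Real.exp (|k.im| * (x - t)) * Real.exp (|k.im| * t)) := by ring
      _ = _ := by rw [← Real.exp_add, ← mul_add, sub_add_cancel]
  have hduhamel := duhamel_formula hq hk hU hx
  rw [hU0, zero_mul, zero_add, one_mul] at hduhamel
  rw [hduhamel, add_sub_cancel_left]
  calc _ ≤ M * A / ‖k‖ * Real.exp (|k.im| * x) * |x - 0| :=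
        intervalIntegral.norm_integral_le_of_norm_le_const hbound
    _ ≤ M * A / ‖k‖ * Real.exp (|k.im| * x) * b := by
        rw [sub_zero, abs_of_nonneg hx.1]
        gcongr
        exact hx.2
    _ = _ := by ring

theorem norm_fst_le {U : ℝ → ℂ × ℂ} {M : ℝ} (hb : 0 ≤ b) (hq : ContinuousOn q (Icc 0 b))
    (hM : ∀ x ∈ Icc 0 b, ‖q x‖ ≤ M) (hk : k ≠ 0) (hkM : 2 * M * b ≤ ‖k‖)
    (hU : IsSchrodingerSolution q (k ^ 2) (Icc 0 b) U) (hU0 : U 0 = (0, 1))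
    {x : ℝ} (hx : x ∈ Icc 0 b) :
    ‖(U x).1‖ ≤ 2 / ‖k‖ * Real.exp (|k.im| * x) := by
  have hUc := hU.continuousOn
  obtain ⟨y, hy, hmax⟩ := isCompact_Icc.exists_isMaxOn (nonempty_Icc.2 hb)
    (f := fun t => ‖(U t).1‖ / Real.exp (|k.im| * t)) (by fun_prop (disch := simp))
  set A := ‖(U y).1‖ / Real.exp (|k.im| * y) with hA_def
  have hA (t : ℝ) (ht : t ∈ Icc 0 b) : ‖(U t).1‖ ≤ A * Real.exp (|k.im| * t) :=
    (div_le_iff₀ (Real.exp_pos _)).1 (hmax ht)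
  have hk' : 0 < ‖k‖ := norm_pos_iff.2 hk
  have hsin : ‖Complex.sin (k * y) / k‖ ≤ 1 / ‖k‖ * Real.exp (|k.im| * y) := by
    rw [norm_div, div_mul_eq_mul_div, one_mul]
    gcongr
    exact norm_sin_mul_ofReal_le k hy.1
  have hAle : A ≤ M * A * b / ‖k‖ + 1 / ‖k‖ := by
    rw [hA_def, div_le_iff₀ (Real.exp_pos _), ← hA_def, add_mul]
    exact norm_le_norm_add_norm_sub' _ _ |>.trans <| (add_comm _ _).trans_le
      (add_le_add (norm_fst_sub_sin_le hq hM hk hU hU0 hA hy) hsin)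
  have hA2 : A ≤ 2 / ‖k‖ := by
    have hA0 : 0 ≤ A := by positivity
    rw [← add_div, le_div_iff₀ hk'] at hAle
    rw [le_div_iff₀ hk']
    nlinarith
  exact (hA x hx).trans (by gcongr)

namespace IsEntireSolutionFamily

variable {S : ℂ → ℝ → ℂ × ℂ}

theorem eventually_norm_fst_le (hb : 0 ≤ b) (hq : ContinuousOn q (Icc 0 b))
    (hS : IsEntireSolutionFamily q b (0, 1) S) :
    ∀ᶠ k in cobounded ℂ, ∀ x ∈ Icc 0 b,
      ‖(S (k ^ 2) x).1‖ ≤ 2 / ‖k‖ * Real.exp (|k.im| * x) := by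
  obtain ⟨M, hM⟩ := isCompact_Icc.exists_bound_of_continuousOn hq
  filter_upwards [eventually_ne_cobounded 0,
    tendsto_norm_cobounded_atTop.eventually_ge_atTop (2 * M * b)] with k hk hkM x hx
  exact norm_fst_le hb hq hM hk hkM (hS.isSolution _) (hS.apply_zero _) hx

theorem exists_eventually_norm_fst_sub_sin_le (hb : 0 ≤ b) (hq : ContinuousOn q (Icc 0 b))
    (hS : IsEntireSolutionFamily q b (0, 1) S) :
    ∃ C, ∀ᶠ k in cobounded ℂ, ∀ x ∈ Icc 0 b,
      ‖(S (k ^ 2) x).1 - Complex.sin (k * x) / k‖ ≤ C / ‖k‖ ^ 2 * Real.exp (|k.im| * x) := by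
  obtain ⟨M, hM⟩ := isCompact_Icc.exists_bound_of_continuousOn hq
  refine ⟨2 * M * b, ?_⟩
  filter_upwards [eventually_ne_cobounded 0, hS.eventually_norm_fst_le hb hq] with k hk hle x hx
  refine (norm_fst_sub_sin_le hq hM hk (hS.isSolution _) (hS.apply_zero _) hle hx).trans_eq ?_
  ring

theorem eventually_le_norm_fst (hb : 0 ≤ b) (hq : ContinuousOn q (Icc 0 b))
    (hS : IsEntireSolutionFamily q b (0, 1) S) :
    ∀ᶠ k in cobounded ℂ, ∀ x ∈ Icc 0 b, ∀ n : ℕ, ‖k‖ * x = (n + 1 / 2) * Real.pi →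
      Real.exp (|k.im| * x) / (16 * ‖k‖) ≤ ‖(S (k ^ 2) x).1‖ := by
  obtain ⟨C, hC⟩ := hS.exists_eventually_norm_fst_sub_sin_le hb hq
  filter_upwards [eventually_ne_cobounded 0, hC,
    tendsto_norm_cobounded_atTop.eventually_ge_atTop (16 * C)] with k hk hle hkC x hx n hn
  have hk' : 0 < ‖k‖ := norm_pos_iff.2 hk
  have hsin : Real.exp (|k.im| * x) / 8 ≤ ‖Complex.sin (k * x)‖ := by
    have hnorm : ‖k * x‖ = (n + 1 / 2) * Real.pi := by
      rw [norm_mul, Complex.norm_of_nonneg hx.1, hn]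
    simpa [abs_mul, abs_of_nonneg hx.1] using exp_abs_im_div_eight_le_norm_sin hnorm
  have herror : C / ‖k‖ ^ 2 ≤ 1 / (16 * ‖k‖) := by
    rw [div_le_div_iff₀ (by positivity) (by positivity)]
    nlinarith
  calc _ = Real.exp (|k.im| * x) / 8 / ‖k‖ - 1 / (16 * ‖k‖) * Real.exp (|k.im| * x) := by
        field_simp
        ring
    _ ≤ ‖Complex.sin (k * x) / k‖ - ‖(S (k ^ 2) x).1 - Complex.sin (k * x) / k‖ := by
        rw [norm_div]
        gcongr
        exact (hle x hx).trans (by gcongr)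
    _ ≤ _ := by
        rw [norm_sub_rev, sub_le_iff_le_add]
        exact norm_le_norm_add_norm_sub' _ _

end IsEntireSolutionFamily

end Growth

section Entire

variable {f : ℂ → ℂ}

theorem eq_zero_of_norm_le_on_spheres (hf : Differentiable ℂ f) {r ε : ℕ → ℝ}
    (hr : Tendsto r atTop atTop) (hε : Tendsto ε atTop (𝓝 0))
    (h : ∀ᶠ n in atTop, ∀ z, ‖z‖ = r n → ‖f z‖ ≤ ε n) (z : ℂ) : f z = 0 := by
  refine norm_le_zero_iff.1 (ge_of_tendsto hε ?_)
  filter_upwards [h, hr.eventually_gt_atTop ‖z‖] with n hn hzr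
  refine Complex.norm_le_of_forall_mem_frontier_norm_le (U := Metric.ball 0 (r n))
    Metric.isBounded_ball hf.diffContOnCl (fun w hw => hn w ?_)
    (subset_closure (by simpa using hzr))
  rwa [frontier_ball _ ((norm_nonneg z).trans_lt hzr).ne', mem_sphere_zero_iff_norm] at hw

theorem eq_zero_of_norm_comp_sq_le (hf : Differentiable ℂ f) {b C : ℝ} (hb : 0 < b)
    (h : ∀ᶠ k in cobounded ℂ, ∀ n : ℕ, ‖k‖ * b = (n + 1 / 2) * Real.pi → ‖f (k ^ 2)‖ ≤ C / ‖k‖)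
    (z : ℂ) : f z = 0 := by
  obtain ⟨k, rfl⟩ := IsAlgClosed.exists_pow_nat_eq z two_pos
  set r : ℕ → ℝ := fun n => (n + 1 / 2) * Real.pi / b
  have hr : Tendsto r atTop atTop :=
    ((tendsto_atTop_add_const_right _ _ tendsto_natCast_atTop_atTop).atTop_mul_const
      Real.pi_pos).atTop_div_const hb
  refine eq_zero_of_norm_le_on_spheres (f := fun k => f (k ^ 2)) (by fun_prop) hr
    (hr.const_div_atTop C) ?_ k
  obtain ⟨K, -, hK⟩ := hasBasis_cobounded_norm.eventually_iff.1 h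
  filter_upwards [hr.eventually_ge_atTop K] with n hn w hw
  rw [← hw] at hn ⊢
  exact hK hn n (by rw [hw, div_mul_cancel₀ _ hb.ne'])

theorem dslope_div_dslope {g : ℂ → ℂ} {z w : ℂ} (hf : f z = 0) (hg : g z = 0) (hw : w ≠ z) :
    dslope f z w / dslope g z w = f w / g w := by
  rw [dslope_of_ne _ hw, dslope_of_ne _ hw, slope_def_field, slope_def_field, hf, hg, sub_zero,
    sub_zero, div_div_div_cancel_right₀ (sub_ne_zero.2 hw)]

theorem exists_differentiable_eq_mul_of_simple_zeros {g : ℂ → ℂ} (hf : Differentiable ℂ f)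
    (hg : Differentiable ℂ g) (hfg : ∀ z, g z = 0 → f z = 0) (hg' : ∀ z, g z = 0 → deriv g z ≠ 0) :
    ∃ h : ℂ → ℂ, Differentiable ℂ h ∧ ∀ z, f z = h z * g z := by
  classical
  set h : ℂ → ℂ := fun z => if g z = 0 then deriv f z / deriv g z else f z / g z
  refine ⟨h, fun z => ?_, fun z => ?_⟩
  · by_cases hz : g z = 0
    · have hdslope {F : ℂ → ℂ} (hF : Differentiable ℂ F) : DifferentiableAt ℂ (dslope F z) z :=
        ((Complex.differentiableOn_dslope univ_mem).2 hF.differentiableOn).differentiableAt univ_mem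
      have hne : dslope g z z ≠ 0 := by
        rw [dslope_same]
        exact hg' z hz
      refine ((hdslope hf).div (hdslope hg) hne).congr_of_eventuallyEq ?_
      filter_upwards [(hdslope hg).continuousAt.eventually_ne hne] with w hw
      rcases eq_or_ne w z with rfl | hwz
      · simp [h, hz]
      · have hgw : g w ≠ 0 := fun hgw => hw (by simp [dslope_of_ne _ hwz, slope_def_field, hz, hgw])
        simp only [h, if_neg hgw, Pi.div_apply, dslope_div_dslope (hfg z hz) hz hwz]
    · refine ((hf z).div (hg z) hz).congr_of_eventuallyEq ?_
      filter_upwards [(hg z).continuousAt.eventually_ne hz] with w hw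
      simp [h, hw]
  · by_cases hz : g z = 0
    · simp [hz, hfg z hz]
    · simp [h, hz]

end Entire

section Local

variable {q q₁ q₂ : ℝ → ℂ} {lam : ℂ} {I : Set ℝ} {U C₁ C₂ T₁ T₂ : ℝ → ℂ × ℂ}

theorem IsSchrodingerSolution.eventually_fst_ne_zero (hU : IsSchrodingerSolution q lam I U) {x : ℝ}
    (hx : x ∈ I) (hUx : U x ≠ 0) : ∀ᶠ y in 𝓝[≠] x, (U y).1 ≠ 0 := by
  have hderiv := hU.hasDerivAt_fst hx
  by_cases hU' : (U x).2 = 0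
  · have hfst : (U x).1 ≠ 0 := fun hU0 => hUx (Prod.ext hU0 hU')
    exact (hderiv.continuousAt.eventually_ne hfst).filter_mono nhdsWithin_le_nhds
  · exact hderiv.eventually_ne hU'

theorem fst_sq_eqOn_of_mul_eqOn (hI : IsOpen I)
    (hC₁ : IsSchrodingerSolution q₁ lam I C₁) (hC₂ : IsSchrodingerSolution q₂ lam I C₂)
    (hT₁ : IsSchrodingerSolution q₁ lam I T₁) (hT₂ : IsSchrodingerSolution q₂ lam I T₂)
    (hW₁ : ∀ x ∈ I, wronskian (C₁ x) (T₁ x) = 1) (hW₂ : ∀ x ∈ I, wronskian (C₂ x) (T₂ x) = 1)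
    (h : EqOn (fun x => (C₁ x).1 * (T₂ x).1) (fun x => (T₁ x).1 * (C₂ x).1) I) :
    EqOn (fun x => (T₁ x).1 ^ 2) (fun x => (T₂ x).1 ^ 2) I := fun x hx => by
  have hderiv := ((hC₁.hasDerivAt_fst hx).mul (hT₂.hasDerivAt_fst hx)).unique
    (((hT₁.hasDerivAt_fst hx).mul (hC₂.hasDerivAt_fst hx)).congr_of_eventuallyEq
      (h.eventuallyEq_of_mem (hI.mem_nhds hx)))
  have hW₁x := hW₁ x hx
  have hW₂x := hW₂ x hx
  have hx' := h hx
  simp only [wronskian] at hW₁x hW₂x hx' ⊢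
  linear_combination (T₂ x).1 ^ 2 * hW₁x - (T₁ x).1 ^ 2 * hW₂x + (T₁ x).1 * (T₂ x).1 * hderiv -
    ((T₁ x).1 * (T₂ x).2 + (T₁ x).2 * (T₂ x).1) * hx'

theorem sub_mul_fst_pow_four_eq_zero (hI : IsOpen I) (hT₁ : IsSchrodingerSolution q₁ lam I T₁)
    (hT₂ : IsSchrodingerSolution q₂ lam I T₂)
    (h : EqOn (fun x => (T₁ x).1 ^ 2) (fun x => (T₂ x).1 ^ 2) I) {x : ℝ} (hx : x ∈ I) :
    (q₁ x - q₂ x) * (T₁ x).1 ^ 4 = 0 := by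
  have hderiv : EqOn (fun x => (T₁ x).1 * (T₁ x).2) (fun x => (T₂ x).1 * (T₂ x).2) I :=
    fun y hy => by
      have hderiv_sq := ((hT₁.hasDerivAt_fst hy).pow 2).unique (((hT₂.hasDerivAt_fst hy).pow 2)
        |>.congr_of_eventuallyEq (h.eventuallyEq_of_mem (hI.mem_nhds hy)))
      simp only [Nat.cast_ofNat, Nat.add_one_sub_one, pow_one] at hderiv_sq
      linear_combination hderiv_sq / 2
  have hderiv₂ := ((hT₁.hasDerivAt_fst hx).mul (hT₁.hasDerivAt_snd hx)).unique
    (((hT₂.hasDerivAt_fst hx).mul (hT₂.hasDerivAt_snd hx)).congr_of_eventuallyEq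
      (hderiv.eventuallyEq_of_mem (hI.mem_nhds hx)))
  have hx₀ := h hx
  have hx₁ := hderiv hx
  beta_reduce at hx₀ hx₁
  linear_combination (T₁ x).1 ^ 2 * hderiv₂ -
    ((T₁ x).1 * (T₁ x).2 + (T₂ x).1 * (T₂ x).2) * hx₁ +
    ((T₂ x).2 ^ 2 - (q₂ x - lam) * (T₁ x).1 ^ 2) * hx₀

theorem eqOn_of_fst_sq_eqOn (hI : IsOpen I) (hq₁ : ContinuousOn q₁ I) (hq₂ : ContinuousOn q₂ I)
    (hT₁ : IsSchrodingerSolution q₁ lam I T₁) (hT₂ : IsSchrodingerSolution q₂ lam I T₂)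
    (hT₁0 : ∀ x ∈ I, T₁ x ≠ 0)
    (h : EqOn (fun x => (T₁ x).1 ^ 2) (fun x => (T₂ x).1 ^ 2) I) : EqOn q₁ q₂ I := fun x hx => by
  have hIx := hI.mem_nhds hx
  refine tendsto_nhds_unique_of_eventuallyEq
    ((hq₁.continuousAt hIx).tendsto.mono_left (nhdsWithin_le_nhds (s := {x}ᶜ)))
    ((hq₂.continuousAt hIx).tendsto.mono_left nhdsWithin_le_nhds) ?_
  filter_upwards [hT₁.eventually_fst_ne_zero hx (hT₁0 x hx), nhdsWithin_le_nhds hIx] with y hy hyI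
  exact sub_eq_zero.1 ((mul_eq_zero.1 (sub_mul_fst_pow_four_eq_zero hI hT₁ hT₂ h hyI)).resolve_right
    (pow_ne_zero 4 hy))

end Local

section Borg

variable {q q₁ q₂ : ℝ → ℂ} {lam : ℂ} {b : ℝ} {S S₁ S₂ T C₁ C₂ T₁ T₂ : ℂ → ℝ → ℂ × ℂ}

theorem IsSchrodingerSolution.reflect {U : ℝ → ℂ × ℂ}
    (hU : IsSchrodingerSolution q lam (Icc 0 b) U) :
    IsSchrodingerSolution (fun y => q (b - y)) lam (Icc 0 b)
      fun y => ((U (b - y)).1, -(U (b - y)).2) := by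
  simpa using hU.comp_const_sub b

theorem fst_sub_eq {U C T : ℝ → ℂ × ℂ} (hU : IsSchrodingerSolution q lam (Icc 0 b) U)
    (hC : IsSchrodingerSolution (fun y => q (b - y)) lam (Icc 0 b) C) (hC0 : C 0 = (1, 0))
    (hT : IsSchrodingerSolution (fun y => q (b - y)) lam (Icc 0 b) T) (hT0 : T 0 = (0, 1))
    {y : ℝ} (hy : y ∈ Icc 0 b) :
    (U (b - y)).1 = (U b).1 * (C y).1 - (U b).2 * (T y).1 := by
  simpa [sub_eq_add_neg] using fst_eq_add_of_fundamental_system hC hC0 hT hT0 hU.reflect hy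

theorem continuousOn_comp_const_sub (hq : ContinuousOn q (Icc 0 b)) :
    ContinuousOn (fun y => q (b - y)) (Icc 0 b) :=
  hq.comp (by fun_prop) fun y hy => ⟨sub_nonneg.2 hy.2, sub_le_self b hy.1⟩

theorem eventually_norm_mul_div_le (hb : 0 < b) {r : ℝ → ℂ} (hq : ContinuousOn q (Icc 0 b))
    (hr : ContinuousOn r (Icc 0 b)) (hS : IsEntireSolutionFamily q b (0, 1) S)
    (hT : IsEntireSolutionFamily r b (0, 1) T) {y : ℝ} (hy : y ∈ Icc 0 b) :
    ∀ᶠ k in cobounded ℂ, ∀ n : ℕ, ‖k‖ * b = (n + 1 / 2) * Real.pi → (S (k ^ 2) b).1 ≠ 0 ∧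
      ‖(S (k ^ 2) (b - y)).1 * (T (k ^ 2) y).1 / (S (k ^ 2) b).1‖ ≤ 64 / ‖k‖ := by
  filter_upwards [eventually_ne_cobounded 0, hS.eventually_norm_fst_le hb.le hq,
    hT.eventually_norm_fst_le hb.le hr, hS.eventually_le_norm_fst hb.le hq]
    with k hk hS_le hT_le hS_ge n hn
  have : 0 < ‖k‖ := norm_pos_iff.2 hk
  have hSb := hS_ge b (right_mem_Icc.2 hb.le) n hn
  have hSb_pos : 0 < ‖(S (k ^ 2) b).1‖ := lt_of_lt_of_le (by positivity) hSb
  refine ⟨norm_pos_iff.1 hSb_pos, ?_⟩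
  rw [norm_div, norm_mul, div_le_iff₀ hSb_pos]
  calc _ ≤ (2 / ‖k‖ * Real.exp (|k.im| * (b - y))) * (2 / ‖k‖ * Real.exp (|k.im| * y)) := by
        gcongr
        exacts [hS_le _ ⟨sub_nonneg.2 hy.2, sub_le_self b hy.1⟩, hT_le y hy]
    _ = 4 / ‖k‖ ^ 2 * (Real.exp (|k.im| * (b - y)) * Real.exp (|k.im| * y)) := by ring
    _ = 64 / ‖k‖ * (Real.exp (|k.im| * b) / (16 * ‖k‖)) := by
        rw [← Real.exp_add, ← mul_add, sub_add_cancel]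
        field_simp
        norm_num
    _ ≤ _ := by gcongr

theorem fst_mul_fst_eq_of_wronskian_eq_zero (hb : 0 < b) (hq₁ : ContinuousOn q₁ (Icc 0 b))
    (hq₂ : ContinuousOn q₂ (Icc 0 b)) (hS₁ : IsEntireSolutionFamily q₁ b (0, 1) S₁)
    (hS₂ : IsEntireSolutionFamily q₂ b (0, 1) S₂)
    (hC₁ : IsEntireSolutionFamily (fun y => q₁ (b - y)) b (1, 0) C₁)
    (hC₂ : IsEntireSolutionFamily (fun y => q₂ (b - y)) b (1, 0) C₂)
    (hT₁ : IsEntireSolutionFamily (fun y => q₁ (b - y)) b (0, 1) T₁)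
    (hT₂ : IsEntireSolutionFamily (fun y => q₂ (b - y)) b (0, 1) T₂)
    (hW : ∀ z, wronskian (S₁ z b) (S₂ z b) = 0) {y : ℝ} (hy : y ∈ Icc 0 b) (z : ℂ) :
    (C₁ z y).1 * (T₂ z y).1 = (T₁ z y).1 * (C₂ z y).1 := by
  refine sub_eq_zero.1 (eq_zero_of_norm_comp_sq_le (C := 128)
    (f := fun z => (C₁ z y).1 * (T₂ z y).1 - (T₁ z y).1 * (C₂ z y).1) ?_ hb ?_ z)
  · exact ((hC₁.differentiable y hy).fst.mul (hT₂.differentiable y hy).fst).sub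
      ((hT₁.differentiable y hy).fst.mul (hC₂.differentiable y hy).fst)
  filter_upwards [
    eventually_norm_mul_div_le hb hq₁ (continuousOn_comp_const_sub hq₂) hS₁ hT₂ hy,
    eventually_norm_mul_div_le hb hq₂ (continuousOn_comp_const_sub hq₁) hS₂ hT₁ hy]
    with k h₁ h₂ n hn
  obtain ⟨hS₁b, h₁⟩ := h₁ n hn
  obtain ⟨hS₂b, h₂⟩ := h₂ n hn
  have hquot : (C₁ (k ^ 2) y).1 * (T₂ (k ^ 2) y).1 - (T₁ (k ^ 2) y).1 * (C₂ (k ^ 2) y).1 =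
      (S₁ (k ^ 2) (b - y)).1 * (T₂ (k ^ 2) y).1 / (S₁ (k ^ 2) b).1 -
        (S₂ (k ^ 2) (b - y)).1 * (T₁ (k ^ 2) y).1 / (S₂ (k ^ 2) b).1 := by
    have hWk := hW (k ^ 2)
    rw [wronskian] at hWk
    rw [fst_sub_eq (hS₁.isSolution _) (hC₁.isSolution _) (hC₁.apply_zero _) (hT₁.isSolution _)
      (hT₁.apply_zero _) hy, fst_sub_eq (hS₂.isSolution _) (hC₂.isSolution _) (hC₂.apply_zero _)
      (hT₂.isSolution _) (hT₂.apply_zero _) hy]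
    field_simp
    linear_combination -((T₁ (k ^ 2) y).1 * (T₂ (k ^ 2) y).1) * hWk
  rw [hquot]
  calc _ ≤ 64 / ‖k‖ + 64 / ‖k‖ := norm_sub_le_of_le h₁ h₂
    _ = 128 / ‖k‖ := by ring

theorem eqOn_of_wronskian_eq_zero (hb : 0 < b) (hq₁ : ContinuousOn q₁ (Icc 0 b))
    (hq₂ : ContinuousOn q₂ (Icc 0 b)) (hS₁ : IsEntireSolutionFamily q₁ b (0, 1) S₁)
    (hS₂ : IsEntireSolutionFamily q₂ b (0, 1) S₂)
    (hW : ∀ z, wronskian (S₁ z b) (S₂ z b) = 0) : EqOn q₁ q₂ (Icc 0 b) := by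
  have hr₁ := continuousOn_comp_const_sub hq₁
  have hr₂ := continuousOn_comp_const_sub hq₂
  obtain ⟨C₁, hC₁⟩ := exists_isEntireSolutionFamily hb.le hr₁ (1, 0)
  obtain ⟨C₂, hC₂⟩ := exists_isEntireSolutionFamily hb.le hr₂ (1, 0)
  obtain ⟨T₁, hT₁⟩ := exists_isEntireSolutionFamily hb.le hr₁ (0, 1)
  obtain ⟨T₂, hT₂⟩ := exists_isEntireSolutionFamily hb.le hr₂ (0, 1)
  have hsub : Ioo 0 b ⊆ Icc 0 b := Ioo_subset_Icc_self
  have hunit {r : ℝ → ℂ} {C T} (hC : IsEntireSolutionFamily r b (1, 0) C)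
      (hT : IsEntireSolutionFamily r b (0, 1) T) (x : ℝ) (hx : x ∈ Ioo 0 b) :
      wronskian (C 0 x) (T 0 x) = 1 := by
    rw [wronskian_eq_left (hC.isSolution 0) (hT.isSolution 0) (hsub hx), hC.apply_zero,
      hT.apply_zero]
    simp [wronskian]
  have hsq := fst_sq_eqOn_of_mul_eqOn isOpen_Ioo ((hC₁.isSolution 0).mono hsub)
    ((hC₂.isSolution 0).mono hsub) ((hT₁.isSolution 0).mono hsub) ((hT₂.isSolution 0).mono hsub)
    (hunit hC₁ hT₁) (hunit hC₂ hT₂) fun y hy =>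
      fst_mul_fst_eq_of_wronskian_eq_zero hb hq₁ hq₂ hS₁ hS₂ hC₁ hC₂ hT₁ hT₂ hW (hsub hy) 0
  have hne (x : ℝ) (hx : x ∈ Ioo 0 b) : T₁ 0 x ≠ 0 := fun hT₁x => by
    simpa [wronskian, hT₁x] using hunit hC₁ hT₁ x hx
  have hEqOn := eqOn_of_fst_sq_eqOn isOpen_Ioo (hr₁.mono hsub) (hr₂.mono hsub)
    ((hT₁.isSolution 0).mono hsub) ((hT₂.isSolution 0).mono hsub) hne hsq
  have hEqOn_Icc := hEqOn.of_subset_closure hr₁ hr₂ hsub (closure_Ioo hb.ne).ge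
  intro x hx
  simpa using hEqOn_Icc (show b - x ∈ Icc 0 b from ⟨sub_nonneg.2 hx.2, sub_le_self b hx.1⟩)

end Borg

section Spectrum

variable {q : ℝ → ℝ} {b : ℝ} {S : ℂ → ℝ → ℂ × ℂ}

theorem hasDerivAt_re {f : ℝ → ℂ} {f' : ℂ} {x : ℝ} (hf : HasDerivAt f f' x) :
    HasDerivAt (fun y => (f y).re) f'.re x :=
  Complex.reCLM.hasFDerivAt.comp_hasDerivAt x hf

theorem IsSchrodingerSolution.exists_re_fst_ne_zero {q : ℝ → ℂ} {lam : ℂ} {U : ℝ → ℂ × ℂ}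
    (hb : 0 < b) (hU : IsSchrodingerSolution q lam (Icc 0 b) U) (hU0 : U 0 = (0, 1)) :
    ∃ x ∈ Icc 0 b, (U x).1.re ≠ 0 := by
  have hre : HasDerivAt (fun x => (U x).1.re) 1 0 := by
    simpa [hU0] using hasDerivAt_re (hU.hasDerivAt_fst (left_mem_Icc.2 hb.le))
  obtain ⟨x, hx, hxb⟩ := (((hre.eventually_ne (c := 0) one_ne_zero).filter_mono
    (nhdsGT_le_nhdsNE 0)).and (Ioo_mem_nhdsGT hb)).exists
  exact ⟨x, Ioo_subset_Icc_self hxb, hx⟩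

theorem isDirichletEigenvalue_iff (hq : ContinuousOn q (Icc 0 1))
    (hS : IsEntireSolutionFamily (fun x => (q x : ℂ)) 1 (0, 1) S) {lam : ℝ} :
    IsDirichletEigenvalue q lam ↔ (S lam 1).1 = 0 := by
  constructor
  · rintro ⟨ψ, ψ', hψ, hψ', ⟨x, hx, hψx⟩, hψ0, hψ1⟩
    have hU : IsSchrodingerSolution (fun x => (q x : ℂ)) lam (Icc 0 1)
        fun x => ((ψ x : ℂ), (ψ' x : ℂ)) := fun x hx =>
      ((hψ x hx).ofReal_comp.prodMk (hψ' x hx).ofReal_comp).congr_deriv (by ext <;> simp [sub_mul])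
    obtain ⟨C, hC⟩ := exists_isEntireSolutionFamily zero_le_one
      (Complex.continuous_ofReal.comp_continuousOn hq) (1, 0)
    have hψ_eq (y : ℝ) (hy : y ∈ Icc 0 1) : (ψ y : ℂ) = ψ' 0 * (S lam y).1 := by
      simpa [hψ0] using fst_eq_add_of_fundamental_system (hC.isSolution lam) (hC.apply_zero lam)
        (hS.isSolution lam) (hS.apply_zero lam) hU hy
    have hψ'0 : (ψ' 0 : ℂ) ≠ 0 := fun h => hψx (by simpa [h] using hψ_eq x hx)
    simpa [hψ1, hψ'0] using hψ_eq 1 (right_mem_Icc.2 zero_le_one)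
  · intro hS1
    refine ⟨fun x => (S lam x).1.re, fun x => (S lam x).2.re, fun x hx => ?_, fun x hx => ?_,
      (hS.isSolution lam).exists_re_fst_ne_zero one_pos (hS.apply_zero lam),
      by simp [hS.apply_zero], by simp [hS1]⟩
    · exact hasDerivAt_re ((hS.isSolution lam).hasDerivAt_fst hx)
    · refine (hasDerivAt_re ((hS.isSolution lam).hasDerivAt_snd hx)).congr_deriv ?_
      simp [sub_mul]

theorem sub_conj_mul_integral_eq (hb : 0 ≤ b) (hq : ContinuousOn q (Icc 0 b))
    (hS : IsEntireSolutionFamily (fun x => (q x : ℂ)) b (0, 1) S) {z : ℂ} (hz : (S z b).1 = 0)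
    (lam : ℂ) : (lam - conj z) * ∫ x in 0..b, (S lam x).1 * conj (S z x).1 =
      (S lam b).1 * conj (S z b).2 := by
  have hqc : ContinuousOn (fun x => (q x : ℂ)) (Icc 0 b) :=
    Complex.continuous_ofReal.comp_continuousOn hq
  have hstar := (hS.isSolution z).star
  simp only [Complex.conj_ofReal] at hstar
  have hgreen := integral_mul_eq_wronskian_sub hb hqc hqc (hS.isSolution lam) hstar
  simp only [sub_sub_sub_cancel_left, intervalIntegral.integral_const_mul] at hgreen
  simpa [wronskian, hS.apply_zero, hz] using hgreen

theorem integral_fst_mul_conj_ne_zero {q : ℝ → ℂ} (hb : 0 < b)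
    (hS : IsEntireSolutionFamily q b (0, 1) S) (z : ℂ) :
    ∫ x in 0..b, (S z x).1 * conj (S z x).1 ≠ 0 := by
  obtain ⟨x, hx, hxne⟩ := (hS.isSolution z).exists_re_fst_ne_zero hb (hS.apply_zero z)
  have hSx : (S z x).1 ≠ 0 := fun h => hxne (by simp [h])
  have hSz : ContinuousOn (S z) (Icc 0 b) := (hS.isSolution z).continuousOn
  simp_rw [Complex.mul_conj', ← Complex.ofReal_pow]
  rw [intervalIntegral.integral_ofReal, Complex.ofReal_ne_zero]
  exact (intervalIntegral.integral_pos hb (by fun_prop) (fun y _ => by positivity)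
    ⟨x, hx, by positivity⟩).ne'

theorem conj_eq_of_fst_eq_zero (hb : 0 < b) (hq : ContinuousOn q (Icc 0 b))
    (hS : IsEntireSolutionFamily (fun x => (q x : ℂ)) b (0, 1) S) {z : ℂ} (hz : (S z b).1 = 0) :
    conj z = z := by
  have hgreen := sub_conj_mul_integral_eq hb.le hq hS hz z
  rw [hz, zero_mul] at hgreen
  exact (sub_eq_zero.1 ((mul_eq_zero.1 hgreen).resolve_right
    (integral_fst_mul_conj_ne_zero hb hS z))).symm

theorem deriv_fst_ne_zero (hb : 0 < b) (hq : ContinuousOn q (Icc 0 b))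
    (hS : IsEntireSolutionFamily (fun x => (q x : ℂ)) b (0, 1) S) {z : ℂ} (hz : (S z b).1 = 0) :
    deriv (fun lam => (S lam b).1) z ≠ 0 := fun hderiv => by
  set J : ℂ → ℂ := fun lam => ∫ x in 0..b, (S lam x).1 * conj (S z x).1
  have hJ : Continuous J := by
    have hScont := hS.continuous
    refine intervalIntegral.continuous_parametric_intervalIntegral_of_continuous' ?_ 0 b
    have hSz : Continuous (S z) := hScont.comp (.prodMk_right z)
    exact hScont.fst.mul (Complex.continuous_conj.comp (hSz.fst.comp continuous_snd))
  have hslope : Tendsto (fun lam => slope (fun lam => (S lam b).1) z lam * conj (S z b).2)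
      (𝓝[≠] z) (𝓝 0) := by
    have hdiff := (hS.differentiable b (right_mem_Icc.2 hb.le)).fst z
    simpa [hderiv] using hdiff.hasDerivAt.tendsto_slope.mul_const (conj (S z b).2)
  refine integral_fst_mul_conj_ne_zero hb hS z (tendsto_nhds_unique
    (hJ.continuousAt.mono_left nhdsWithin_le_nhds) (hslope.congr' ?_))
  filter_upwards [self_mem_nhdsWithin] with lam hlam
  have hgreen := sub_conj_mul_integral_eq hb.le hq hS hz lam
  rw [conj_eq_of_fst_eq_zero hb hq hS hz] at hgreen
  rw [slope_def_field, hz, sub_zero, div_mul_eq_mul_div, ← hgreen,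
    mul_div_cancel_left₀ _ (sub_ne_zero.2 hlam)]

end Spectrum

section HalfPotential

theorem eq_zero_of_norm_mul_fst_le {q : ℝ → ℂ} {b C : ℝ} {S : ℂ → ℝ → ℂ × ℂ} {h : ℂ → ℂ}
    (hb : 0 < b) (hq : ContinuousOn q (Icc 0 b)) (hS : IsEntireSolutionFamily q b (0, 1) S)
    (hh : Differentiable ℂ h) (hle : ∀ᶠ k in cobounded ℂ,
      ‖h (k ^ 2) * (S (k ^ 2) b).1‖ ≤ C / ‖k‖ ^ 2 * Real.exp (|k.im| * b)) (z : ℂ) : h z = 0 := by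
  refine eq_zero_of_norm_comp_sq_le hh hb (C := 16 * C) ?_ z
  filter_upwards [eventually_ne_cobounded 0, hle, hS.eventually_le_norm_fst hb.le hq]
    with k hk hhk hSk n hn
  have : 0 < ‖k‖ := norm_pos_iff.2 hk
  refine le_of_mul_le_mul_right (a := Real.exp (|k.im| * b) / (16 * ‖k‖)) ?_ (by positivity)
  calc _ ≤ ‖h (k ^ 2)‖ * ‖(S (k ^ 2) b).1‖ := by
        gcongr
        exact hSk b (right_mem_Icc.2 hb.le) n hn
    _ ≤ C / ‖k‖ ^ 2 * Real.exp (|k.im| * b) := (norm_mul _ _).symm.trans_le hhk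
    _ = 16 * C / ‖k‖ * (Real.exp (|k.im| * b) / (16 * ‖k‖)) := by field_simp

theorem exists_eventually_norm_wronskian_le {q₁ q₂ : ℝ → ℂ} {b : ℝ} {S₁ S₂ : ℂ → ℝ → ℂ × ℂ}
    (hb : 0 ≤ b) (hq₁ : ContinuousOn q₁ (Icc 0 b)) (hq₂ : ContinuousOn q₂ (Icc 0 b))
    (hS₁ : IsEntireSolutionFamily q₁ b (0, 1) S₁) (hS₂ : IsEntireSolutionFamily q₂ b (0, 1) S₂) :
    ∃ C, ∀ᶠ k in cobounded ℂ, ‖wronskian (S₁ (k ^ 2) b) (S₂ (k ^ 2) b)‖ ≤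
      C / ‖k‖ ^ 2 * Real.exp (|k.im| * (2 * b)) := by
  obtain ⟨M, hM⟩ := isCompact_Icc.exists_bound_of_continuousOn (hq₂.sub hq₁)
  refine ⟨4 * M * b, ?_⟩
  filter_upwards [hS₁.eventually_norm_fst_le hb hq₁, hS₂.eventually_norm_fst_le hb hq₂]
    with k h₁ h₂
  have hgreen := integral_mul_eq_wronskian_sub hb hq₁ hq₂ (hS₁.isSolution (k ^ 2))
    (hS₂.isSolution (k ^ 2))
  simp only [sub_sub_sub_cancel_right, hS₁.apply_zero, hS₂.apply_zero] at hgreen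
  have hbound (x : ℝ) (hx : x ∈ uIoc 0 b) :
      ‖(q₂ x - q₁ x) * ((S₁ (k ^ 2) x).1 * (S₂ (k ^ 2) x).1)‖ ≤
        4 * M / ‖k‖ ^ 2 * Real.exp (|k.im| * (2 * b)) := by
    rw [uIoc_of_le hb] at hx
    have hx' := Ioc_subset_Icc_self hx
    have hM0 : 0 ≤ M := (norm_nonneg _).trans (hM x hx')
    rw [norm_mul, norm_mul]
    calc _ ≤ M * ((2 / ‖k‖ * Real.exp (|k.im| * b)) * (2 / ‖k‖ * Real.exp (|k.im| * b))) := by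
          gcongr
          exacts [hM x hx', (h₁ x hx').trans (by gcongr; exact hx.2),
            (h₂ x hx').trans (by gcongr; exact hx.2)]
      _ = 4 * M / ‖k‖ ^ 2 * (Real.exp (|k.im| * b) * Real.exp (|k.im| * b)) := by ring
      _ = _ := by rw [← Real.exp_add, ← two_mul, mul_left_comm]
  calc _ = ‖∫ x in 0..b, (q₂ x - q₁ x) * ((S₁ (k ^ 2) x).1 * (S₂ (k ^ 2) x).1)‖ := by
        rw [hgreen]
        simp [wronskian]
    _ ≤ 4 * M / ‖k‖ ^ 2 * Real.exp (|k.im| * (2 * b)) * |b - 0| :=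
        intervalIntegral.norm_integral_le_of_norm_le_const hbound
    _ = _ := by
        rw [sub_zero, abs_of_nonneg hb]
        ring

variable {q₁ q₂ : ℝ → ℝ} {a : ℝ} {S₁ S₂ : ℂ → ℝ → ℂ × ℂ}

theorem wronskian_eq_zero_of_fst_eq_zero (ha : 0 ≤ a) (ha1 : a ≤ 1)
    (hq₁ : ContinuousOn q₁ (Icc 0 1)) (hq₂ : ContinuousOn q₂ (Icc 0 1))
    (hEq : EqOn q₁ q₂ (Icc a 1))
    (hspec : {lam | IsDirichletEigenvalue q₁ lam} ⊆ {lam | IsDirichletEigenvalue q₂ lam})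
    (hS₁ : IsEntireSolutionFamily (fun x => (q₁ x : ℂ)) 1 (0, 1) S₁)
    (hS₂ : IsEntireSolutionFamily (fun x => (q₂ x : ℂ)) 1 (0, 1) S₂) {z : ℂ}
    (hz : (S₁ z 1).1 = 0) : wronskian (S₁ z a) (S₂ z a) = 0 := by
  have hz₂ : (S₂ z 1).1 = 0 := by
    obtain ⟨lam, rfl⟩ := Complex.conj_eq_iff_real.1 (conj_eq_of_fst_eq_zero one_pos hq₁ hS₁ hz)
    exact (isDirichletEigenvalue_iff hq₂ hS₂).1 (hspec ((isDirichletEigenvalue_iff hq₁ hS₁).2 hz))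
  have hsub : Icc a 1 ⊆ Icc 0 1 := Icc_subset_Icc_left ha
  have hsol₁ := ((hS₁.isSolution z).mono hsub).congr (r := fun x => (q₂ x : ℂ))
    fun x hx => congrArg _ (hEq hx)
  rw [← wronskian_eq_left hsol₁ ((hS₂.isSolution z).mono hsub) (right_mem_Icc.2 ha1)]
  simp [wronskian, hz, hz₂]

theorem wronskian_eq_zero_of_spectrum_subset (ha : 0 ≤ a) (ha2 : a ≤ 1 / 2)
    (hq₁ : ContinuousOn q₁ (Icc 0 1)) (hq₂ : ContinuousOn q₂ (Icc 0 1))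
    (hEq : EqOn q₁ q₂ (Icc a 1))
    (hspec : {lam | IsDirichletEigenvalue q₁ lam} ⊆ {lam | IsDirichletEigenvalue q₂ lam})
    (hS₁ : IsEntireSolutionFamily (fun x => (q₁ x : ℂ)) 1 (0, 1) S₁)
    (hS₂ : IsEntireSolutionFamily (fun x => (q₂ x : ℂ)) 1 (0, 1) S₂) (z : ℂ) :
    wronskian (S₁ z a) (S₂ z a) = 0 := by
  have ha1 : a ≤ 1 := ha2.trans (by norm_num)
  have hq₁c : ContinuousOn (fun x => (q₁ x : ℂ)) (Icc 0 1) :=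
    Complex.continuous_ofReal.comp_continuousOn hq₁
  have hq₂c : ContinuousOn (fun x => (q₂ x : ℂ)) (Icc 0 1) :=
    Complex.continuous_ofReal.comp_continuousOn hq₂
  have hsub : Icc 0 a ⊆ Icc 0 1 := Icc_subset_Icc_right ha1
  have hW : Differentiable ℂ fun z => wronskian (S₁ z a) (S₂ z a) := by
    have h₁ := hS₁.differentiable a ⟨ha, ha1⟩
    have h₂ := hS₂.differentiable a ⟨ha, ha1⟩
    exact (h₁.fst.mul h₂.snd).sub (h₁.snd.mul h₂.fst)
  obtain ⟨h, hh, hWh⟩ := exists_differentiable_eq_mul_of_simple_zeros hW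
    (hS₁.differentiable 1 (right_mem_Icc.2 zero_le_one)).fst
    (fun z => wronskian_eq_zero_of_fst_eq_zero ha ha1 hq₁ hq₂ hEq hspec hS₁ hS₂)
    fun z => deriv_fst_ne_zero one_pos hq₁ hS₁
  obtain ⟨C, hC⟩ := exists_eventually_norm_wronskian_le ha (hq₁c.mono hsub) (hq₂c.mono hsub)
    (hS₁.mono ha1) (hS₂.mono ha1)
  rw [hWh, eq_zero_of_norm_mul_fst_le one_pos hq₁c hS₁ hh (C := C) ?_ z, zero_mul]
  filter_upwards [hC] with k hk
  have hC0 : 0 ≤ C / ‖k‖ ^ 2 :=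
    nonneg_of_mul_nonneg_left ((norm_nonneg _).trans hk) (Real.exp_pos _)
  rw [← hWh]
  refine hk.trans ?_
  gcongr
  linarith

end HalfPotential

end HochstadtLieberman

open Set HochstadtLieberman in
theorem spectrum_and_half_potential_determine_potential_general
    (q1 q2 : ℝ → ℝ)
    (hq1 : ContinuousOn q1 (Icc 0 1)) (hq2 : ContinuousOn q2 (Icc 0 1))
    (hhalf : ∀ x ∈ Icc (1 / 2 : ℝ) 1, q1 x = q2 x)
    (hspec : {lam : ℝ | IsDirichletEigenvalue q1 lam}
        ⊆ {lam : ℝ | IsDirichletEigenvalue q2 lam}) :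
    ∀ x ∈ Icc (0:ℝ) 1, q1 x = q2 x := by
  have hq₁c := Complex.continuous_ofReal.comp_continuousOn hq1
  have hq₂c := Complex.continuous_ofReal.comp_continuousOn hq2
  obtain ⟨S₁, hS₁⟩ := exists_isEntireSolutionFamily zero_le_one hq₁c (0, 1)
  obtain ⟨S₂, hS₂⟩ := exists_isEntireSolutionFamily zero_le_one hq₂c (0, 1)
  have hW := wronskian_eq_zero_of_spectrum_subset (by norm_num) le_rfl hq1 hq2 hhalf hspec hS₁ hS₂
  have h1 : (1 / 2 : ℝ) ≤ 1 := by norm_num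
  have hsub : Icc (0 : ℝ) (1 / 2) ⊆ Icc 0 1 := Icc_subset_Icc_right h1
  have hleft := eqOn_of_wronskian_eq_zero one_half_pos (hq₁c.mono hsub) (hq₂c.mono hsub)
    (hS₁.mono h1) (hS₂.mono h1) hW
  intro x hx
  rcases le_total x (1 / 2) with hx2 | hx2
  · exact Complex.ofReal_injective (hleft ⟨hx.1, hx2⟩)
  · exact hhalf x ⟨hx2, hx.2⟩

/-- two continuous potentials that agree on `[1/2,1]` and have the same
set of Dirichlet eigenvalues coincide on all of `[0,1]`. -/
theorem spectrum_and_half_potential_determine_potential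
    (q1 q2 : ℝ → ℝ)
    (hq1 : ContinuousOn q1 (Set.Icc 0 1)) (hq2 : ContinuousOn q2 (Set.Icc 0 1))
    (hhalf : ∀ x ∈ Set.Icc (1/2 : ℝ) 1, q1 x = q2 x)
    (hspec : {lam : ℝ | IsDirichletEigenvalue q1 lam}
        = {lam : ℝ | IsDirichletEigenvalue q2 lam}) :
    ∀ x ∈ Set.Icc (0:ℝ) 1, q1 x = q2 x :=
  spectrum_and_half_potential_determine_potential_general q1 q2 hq1 hq2 hhalf hspec.subset
end

section
/- Let q1 and q2 be continuous real-valued potentials on [0,1] that are both symmetric about the midpoint, i.e. qi(1/2 + x) = qi(1/2 − x) for all x ∈ [0,1/2] and i = 1,2. If q1 and q2 have the same set of Dirichlet eigenvalues, then q1 = q2 on [0,1]. -/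
/-!
For complex `l` let `φ(l, x)` solve `-φ'' + q φ = l φ` with `φ(l, 0) = 0` and `φ'(l, 0) = 1`. The
Dirichlet eigenvalues are the zeros of the entire function `D(l) = φ(l, 1)`; these are real, and
simple because `φ'(l, 1) D'(l) = ∫ φ(l, t)² dt > 0` there. Duhamel's formula gives
`φ(k², x) = O(exp(|Im k| x) / |k|)` and `k D(k²) = sin k + O(exp |Im k| / |k|)`. Consequently an
entire `f` that vanishes at the zeros of `D` and satisfies `f(k²) = O(exp |Im k| / |k|²)` is zero:
`f / D` is entire, and `f(k²) / D(k²)` tends to zero on the boundaries of the squares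
`|Re k|, |Im k| < (n + 1/2) π`, where `|sin k|` is comparable to `exp |Im k|`.

Applied to `D₂ - D₁`, this shows `D₁ = D₂ = D`. If `q₁` and `q₂` are symmetric, then at each
eigenvalue `φᵢ(1 - x) = -φᵢ'(1) φᵢ(x)` with `φᵢ'(1) = ±1`, and `φᵢ'(1)` has the sign of `D'`. Hence
`φ₁(l, x) φ₂(l, 1 - x) - φ₁(l, 1 - x) φ₂(l, x)` vanishes at the zeros of `D`, and its growth forces
it to vanish for all `l`. Since the Wronskian of `φᵢ(l, x)` and `φᵢ(l, 1 - x)` is constantly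
`-D(l)`, differentiating this identity in `x` yields `D φ₁² = D φ₂²`. For nonreal `l` neither `D(l)`
nor `φ₁(l, x)` with `x > 0` is zero, and differentiating `φ₁² = φ₂²` twice recovers `q₁ = q₂`.
-/

open Set Filter Topology Bornology ComplexConjugate

section LinearODE

variable {𝕜 E : Type*} [NontriviallyNormedField 𝕜] [NormedAddCommGroup E] [NormedSpace 𝕜 E]
  {a b : ℝ}

theorem norm_IccExtend_le (hab : a ≤ b) (u : C(Icc a b, E)) (x : ℝ) :
    ‖IccExtend hab u x‖ ≤ ‖u‖ :=
  u.norm_coe_le_norm _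

theorem continuous_IccExtend_clm_apply (hab : a ≤ b) (A : C(Icc a b, E →L[𝕜] E))
    (u : C(Icc a b, E)) : Continuous fun t => IccExtend hab A t (IccExtend hab u t) :=
  A.continuous.Icc_extend'.clm_apply u.continuous.Icc_extend'

variable [NormedSpace ℝ E]

theorem eq_zero_of_hasDerivWithinAt_clm_apply {A : ℝ → E →L[𝕜] E} {y : ℝ → E}
    (hA : ContinuousOn A (Icc a b)) (hy : ContinuousOn y (Icc a b))
    (hy' : ∀ x ∈ Ico a b, HasDerivWithinAt y (A x (y x)) (Ici x) x) (hya : y a = 0) :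
    ∀ x ∈ Icc a b, y x = 0 := by
  obtain ⟨C, hC⟩ := isCompact_Icc.exists_bound_of_continuousOn hA
  exact eq_zero_of_abs_deriv_le_mul_abs_self_of_eq_zero_right hy hy' hya fun x hx =>
    (A x).le_of_opNorm_le (hC x (Ico_subset_Icc_self hx)) (y x)

section Existence

variable [SMulCommClass ℝ 𝕜 E] (hab : a ≤ b)

/-- The Volterra integral operator `(volterra A u) x = ∫ t in a..x, A t (u t)` on continuous
functions on `[a, b]`, as a bounded bilinear map. Functions on `[a, b]` are extended by constants
to form the integral. -/
noncomputable def volterra : C(Icc a b, E →L[𝕜] E) →L[𝕜] C(Icc a b, E) →L[𝕜] C(Icc a b, E) :=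
  LinearMap.mkContinuous₂
    (LinearMap.mk₂ 𝕜
      (fun A u => ⟨fun x => ∫ t in a..x, IccExtend hab A t (IccExtend hab u t),
        (intervalIntegral.continuous_primitive (fun _ _ =>
          (continuous_IccExtend_clm_apply hab A u).intervalIntegrable _ _) a).comp
            continuous_subtype_val⟩)
      (fun A B u => ContinuousMap.ext fun x => intervalIntegral.integral_add
        ((continuous_IccExtend_clm_apply hab A u).intervalIntegrable _ _)
        ((continuous_IccExtend_clm_apply hab B u).intervalIntegrable _ _))
      (fun c A u => ContinuousMap.ext fun x => intervalIntegral.integral_smul c _)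
      (fun A u v => ContinuousMap.ext fun x => by
        simpa [IccExtend] using intervalIntegral.integral_add
          ((continuous_IccExtend_clm_apply hab A u).intervalIntegrable a x)
          ((continuous_IccExtend_clm_apply hab A v).intervalIntegrable a x))
      (fun c A u => ContinuousMap.ext fun x => by simp [IccExtend]))
    (b - a) fun A u => by
      refine (ContinuousMap.norm_le _ (by have := sub_nonneg.2 hab; positivity)).2 fun x => ?_
      have hbound := intervalIntegral.norm_integral_le_of_norm_le_const (a := a) (b := x)
        (f := fun t => IccExtend hab A t (IccExtend hab u t)) (C := ‖A‖ * ‖u‖) fun t _ =>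
          (ContinuousLinearMap.le_opNorm _ _).trans (by gcongr <;> exact norm_IccExtend_le hab _ t)
      rw [abs_of_nonneg (sub_nonneg.2 x.2.1)] at hbound
      refine hbound.trans ?_
      rw [mul_comm, ← mul_assoc]
      gcongr
      exact x.2.2

theorem volterra_apply (A : C(Icc a b, E →L[𝕜] E)) (u : C(Icc a b, E)) (x : Icc a b) :
    volterra hab A u x = ∫ t in a..x, IccExtend hab A t (IccExtend hab u t) :=
  rfl

theorem norm_volterra_pow_apply_le (A : C(Icc a b, E →L[𝕜] E)) (u : C(Icc a b, E)) (n : ℕ)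
    (x : Icc a b) :
    ‖(volterra hab A ^ n) u x‖ ≤ ‖A‖ ^ n * ‖u‖ * ((x - a) ^ n / n.factorial) := by
  induction n generalizing x with
  | zero => simpa using u.norm_coe_le_norm x
  | succ n ih =>
    rw [pow_succ', show (volterra hab A * volterra hab A ^ n) u x =
      volterra hab A ((volterra hab A ^ n) u) x from rfl, volterra_apply]
    have hle : ∀ t ∈ Ioc a (x : ℝ),
        ‖IccExtend hab A t (IccExtend hab ((volterra hab A ^ n) u) t)‖ ≤
          ‖A‖ * (‖A‖ ^ n * ‖u‖ * ((t - a) ^ n / n.factorial)) := fun t ht => by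
      refine (ContinuousLinearMap.le_opNorm _ _).trans ?_
      gcongr
      · exact norm_IccExtend_le hab A t
      · have ht' : t ∈ Icc a b := ⟨ht.1.le, ht.2.trans x.2.2⟩
        rw [IccExtend_of_mem hab _ ht']
        exact ih ⟨t, ht'⟩
    refine (intervalIntegral.norm_integral_le_of_norm_le x.2.1 (.of_forall hle)
      (Continuous.intervalIntegrable (by fun_prop) _ _)).trans_eq ?_
    simp only [intervalIntegral.integral_const_mul, intervalIntegral.integral_div,
      intervalIntegral.integral_comp_sub_right (fun t => t ^ n), integral_pow, sub_self,
      Nat.factorial_succ]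
    push_cast
    rw [zero_pow n.succ_ne_zero]
    field_simp
    ring

theorem differentiableAt_inverse_one_sub_apply {F G : Type*} [NormedAddCommGroup F]
    [NormedSpace 𝕜 F] [NormedAddCommGroup G] [NormedSpace 𝕜 G] [CompleteSpace G]
    (T : F →L[𝕜] G →L[𝕜] G) (g : G) {v : F} (hv : IsUnit (1 - T v)) :
    DifferentiableAt 𝕜 (fun w => Ring.inverse (1 - T w) g) v := by
  have hsub : DifferentiableAt 𝕜 (fun w => 1 - T w) v := T.differentiableAt.const_sub 1
  exact ((differentiableAt_inverse (𝕜 := 𝕜) hv).comp v hsub).clm_apply (differentiableAt_const g)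

theorem isUnit_one_sub_of_norm_pow_lt_one {R : Type*} [NormedRing R] [CompleteSpace R] {x : R}
    {n : ℕ} (h : ‖x ^ n‖ < 1) : IsUnit (1 - x) := by
  have hcomm : Commute (1 - x) (∑ i ∈ Finset.range n, x ^ i) :=
    (Commute.one_left _).sub_left (.sum_right _ _ _ fun i _ => Commute.self_pow x i)
  refine (hcomm.isUnit_mul_iff.1 ?_).1
  rw [mul_neg_geom_sum]
  exact isUnit_one_sub_of_norm_lt_one h

/-- The solution in `C([a, b], E)` of the integral equation `u x = y₀ + ∫ t in a..x, A t (u t)`. -/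
noncomputable def volterraSol (A : C(Icc a b, E →L[𝕜] E)) (y₀ : E) : C(Icc a b, E) :=
  Ring.inverse (1 - volterra hab A) (.const _ y₀)

/-- The solution of `y' = A y` on `[a, b]` with `y a = y₀`, extended to a `C¹` function on `ℝ`. -/
noncomputable def linearODESol (A : C(Icc a b, E →L[𝕜] E)) (y₀ : E) (x : ℝ) : E :=
  y₀ + ∫ t in a..x, IccExtend hab A t (IccExtend hab (volterraSol hab A y₀) t)

theorem linearODESol_left (A : C(Icc a b, E →L[𝕜] E)) (y₀ : E) : linearODESol hab A y₀ a = y₀ := by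
  simp [linearODESol]

variable [CompleteSpace E]

theorem isUnit_one_sub_volterra (A : C(Icc a b, E →L[𝕜] E)) : IsUnit (1 - volterra hab A) := by
  obtain ⟨n, hn⟩ := ((FloorSemiring.tendsto_pow_div_factorial_atTop
    (‖A‖ * (b - a))).eventually_lt_const one_half_pos).exists
  refine isUnit_one_sub_of_norm_pow_lt_one (R := C(Icc a b, E) →L[𝕜] C(Icc a b, E)) (n := n)
    (lt_of_le_of_lt ?_ one_half_lt_one)
  refine ContinuousLinearMap.opNorm_le_bound _ one_half_pos.le fun u =>
    (ContinuousMap.norm_le _ (by positivity)).2 fun x => ?_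
  calc ‖(volterra hab A ^ n) u x‖
      ≤ ‖A‖ ^ n * ‖u‖ * ((x - a) ^ n / n.factorial) := norm_volterra_pow_apply_le hab A u n x
    _ ≤ ‖A‖ ^ n * ‖u‖ * ((b - a) ^ n / n.factorial) := by
        have := sub_nonneg.2 x.2.1
        gcongr
        exact x.2.2
    _ = (‖A‖ * (b - a)) ^ n / n.factorial * ‖u‖ := by rw [mul_pow]; ring
    _ ≤ 1 / 2 * ‖u‖ := by gcongr

theorem volterraSol_eq_add (A : C(Icc a b, E →L[𝕜] E)) (y₀ : E) :
    volterraSol hab A y₀ = .const _ y₀ + volterra hab A (volterraSol hab A y₀) := by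
  have h := DFunLike.congr_fun (Ring.mul_inverse_cancel _ (isUnit_one_sub_volterra hab A))
    (.const _ y₀)
  exact sub_eq_iff_eq_add.1 h

theorem differentiable_volterraSol (y₀ : E) :
    Differentiable 𝕜 fun A : C(Icc a b, E →L[𝕜] E) => volterraSol hab A y₀ := fun A =>
  differentiableAt_inverse_one_sub_apply (F := C(Icc a b, E →L[𝕜] E)) (G := C(Icc a b, E))
    (volterra hab) (.const _ y₀) (isUnit_one_sub_volterra hab A)

theorem linearODESol_coe (A : C(Icc a b, E →L[𝕜] E)) (y₀ : E) (x : Icc a b) :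
    linearODESol hab A y₀ x = volterraSol hab A y₀ x :=
  (DFunLike.congr_fun (volterraSol_eq_add hab A y₀) x).symm

theorem hasDerivAt_linearODESol (A : C(Icc a b, E →L[𝕜] E)) (y₀ : E) (x : Icc a b) :
    HasDerivAt (linearODESol hab A y₀) (A x (linearODESol hab A y₀ x)) x := by
  have h := ((continuous_IccExtend_clm_apply hab A
    (volterraSol hab A y₀)).integral_hasStrictDerivAt a x).hasDerivAt.const_add y₀
  rw [IccExtend_val, IccExtend_val, ← linearODESol_coe hab A y₀ x] at h
  exact h

theorem differentiable_linearODESol (y₀ : E) (x : Icc a b) :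
    Differentiable 𝕜 fun A : C(Icc a b, E →L[𝕜] E) => linearODESol hab A y₀ x := by
  simp only [linearODESol_coe]
  exact (ContinuousMap.evalCLM 𝕜 x).differentiable.comp
    (differentiable_volterraSol (𝕜 := 𝕜) hab y₀)

theorem continuous_uncurry_linearODESol (y₀ : E) :
    Continuous fun z : C(Icc a b, E →L[𝕜] E) × ℝ => linearODESol hab z.1 y₀ z.2 := by
  have hsol := (differentiable_volterraSol (𝕜 := 𝕜) hab y₀).continuous
  have hproj : Continuous fun w : (C(Icc a b, E →L[𝕜] E) × ℝ) × ℝ => projIcc a b hab w.2 :=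
    continuous_projIcc.comp continuous_snd
  refine continuous_const.add
    (intervalIntegral.continuous_parametric_intervalIntegral_of_continuous ?_ continuous_snd)
  exact (continuous_fst.fst.eval hproj).clm_apply ((hsol.comp continuous_fst.fst).eval hproj)

end Existence
end LinearODE

/-- `u` solves `u'' = p u` on `[0, 1]` and `u'` is its derivative there. -/
structure IsSchrodingerSolution (p u u' : ℝ → ℂ) : Prop where
  hasDerivAt : ∀ x ∈ Icc (0 : ℝ) 1, HasDerivAt u (u' x) x
  hasDerivAt_deriv : ∀ x ∈ Icc (0 : ℝ) 1, HasDerivAt u' (p x * u x) x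

/-- The coefficient matrix `(y, y') ↦ (y', c y)` of the first-order system of `y'' = c y`. -/
noncomputable def schrodingerMatrix (c : ℂ) : ℂ × ℂ →L[ℂ] ℂ × ℂ :=
  .inl ℂ ℂ ℂ ∘L .snd ℂ ℂ ℂ + c • .inr ℂ ℂ ℂ ∘L .fst ℂ ℂ ℂ

theorem schrodingerMatrix_apply (c : ℂ) (z : ℂ × ℂ) : schrodingerMatrix c z = (z.2, c * z.1) := by
  simp [schrodingerMatrix]

theorem continuous_schrodingerMatrix : Continuous schrodingerMatrix := by
  unfold schrodingerMatrix
  fun_prop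

namespace IsSchrodingerSolution

variable {p r u u' v v' : ℝ → ℂ}

theorem continuousOn (hu : IsSchrodingerSolution p u u') : ContinuousOn u (Icc 0 1) :=
  HasDerivAt.continuousOn hu.hasDerivAt

theorem continuousOn_deriv (hu : IsSchrodingerSolution p u u') : ContinuousOn u' (Icc 0 1) :=
  HasDerivAt.continuousOn hu.hasDerivAt_deriv

theorem congr (hu : IsSchrodingerSolution p u u') (hpr : EqOn p r (Icc 0 1)) :
    IsSchrodingerSolution r u u' :=
  ⟨hu.hasDerivAt, fun x hx => hpr hx ▸ hu.hasDerivAt_deriv x hx⟩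

theorem sub_const_mul (hu : IsSchrodingerSolution p u u') (hv : IsSchrodingerSolution p v v')
    (c : ℂ) : IsSchrodingerSolution p (fun x => u x - c * v x) fun x => u' x - c * v' x where
  hasDerivAt x hx := (hu.hasDerivAt x hx).sub ((hv.hasDerivAt x hx).const_mul c)
  hasDerivAt_deriv x hx :=
    ((hu.hasDerivAt_deriv x hx).sub ((hv.hasDerivAt_deriv x hx).const_mul c)).congr_deriv (by ring)

theorem star (hu : IsSchrodingerSolution p u u') : IsSchrodingerSolution (fun x => conj (p x))
    (fun x => conj (u x)) fun x => conj (u' x) where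
  hasDerivAt x hx := (hu.hasDerivAt x hx).star
  hasDerivAt_deriv x hx := (hu.hasDerivAt_deriv x hx).star.congr_deriv (map_mul (starRingEnd ℂ) _ _)

theorem comp_one_sub (hu : IsSchrodingerSolution p u u') :
    IsSchrodingerSolution (fun x => p (1 - x)) (fun x => u (1 - x)) fun x => -u' (1 - x) where
  hasDerivAt x hx := (hu.hasDerivAt _ (Icc.one_sub_mem hx)).comp_const_sub 1 x
  hasDerivAt_deriv x hx :=
    ((hu.hasDerivAt_deriv _ (Icc.one_sub_mem hx)).comp_const_sub 1 x).neg.congr_deriv (neg_neg _)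

theorem eq_zero (hu : IsSchrodingerSolution p u u') (hp : ContinuousOn p (Icc 0 1))
    (h0 : u 0 = 0) (h0' : u' 0 = 0) {x : ℝ} (hx : x ∈ Icc (0 : ℝ) 1) : u x = 0 ∧ u' x = 0 := by
  have h := eq_zero_of_hasDerivWithinAt_clm_apply (y := fun x => (u x, u' x))
    (continuous_schrodingerMatrix.comp_continuousOn hp)
    (hu.continuousOn.prodMk hu.continuousOn_deriv) (fun t ht => ?_) (by simp [h0, h0']) x hx
  · exact Prod.mk_eq_zero.1 h
  · have ht' := Ico_subset_Icc_self ht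
    simpa only [Function.comp_apply, schrodingerMatrix_apply] using
      ((hu.hasDerivAt t ht').prodMk (hu.hasDerivAt_deriv t ht')).hasDerivWithinAt

theorem eq_const_mul (hu : IsSchrodingerSolution p u u') (hv : IsSchrodingerSolution p v v')
    (hp : ContinuousOn p (Icc 0 1)) (hu0 : u 0 = 0) (hv0 : v 0 = 0) (hv0' : v' 0 = 1) {x : ℝ}
    (hx : x ∈ Icc (0 : ℝ) 1) : u x = u' 0 * v x ∧ u' x = u' 0 * v' x := by
  have h := (hu.sub_const_mul hv (u' 0)).eq_zero hp (by simp [hu0, hv0]) (by simp [hv0']) hx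
  exact ⟨sub_eq_zero.1 h.1, sub_eq_zero.1 h.2⟩

/-- Lagrange's identity. -/
theorem wronskian_sub_wronskian (hu : IsSchrodingerSolution p u u')
    (hv : IsSchrodingerSolution r v v') (hp : ContinuousOn p (Icc 0 1))
    (hr : ContinuousOn r (Icc 0 1)) {x : ℝ} (hx : x ∈ Icc (0 : ℝ) 1) :
    (u x * v' x - u' x * v x) - (u 0 * v' 0 - u' 0 * v 0) =
      ∫ t in 0..x, (r t - p t) * (u t * v t) := by
  have hsub : uIcc 0 x ⊆ Icc 0 1 := by
    rw [uIcc_of_le hx.1]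
    exact Icc_subset_Icc_right hx.2
  refine (intervalIntegral.integral_eq_sub_of_hasDerivAt
    (f := fun t => u t * v' t - u' t * v t) (fun t ht => ?_)
    (ContinuousOn.mono ?_ hsub).intervalIntegrable).symm
  · exact (((hu.hasDerivAt t (hsub ht)).mul (hv.hasDerivAt_deriv t (hsub ht))).sub
      ((hu.hasDerivAt_deriv t (hsub ht)).mul (hv.hasDerivAt t (hsub ht)))).congr_deriv (by ring)
  · exact (hr.sub hp).mul (hu.continuousOn.mul hv.continuousOn)

theorem eqOn_of_sq_eq (hu : IsSchrodingerSolution p u u') (hv : IsSchrodingerSolution r v v')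
    (hsq : ∀ x ∈ Ioo (0 : ℝ) 1, u x ^ 2 = v x ^ 2) (hne : ∀ x ∈ Ioo (0 : ℝ) 1, u x ≠ 0) :
    EqOn p r (Ioo 0 1) := fun x hx => by
  have hderiv : ∀ y ∈ Ioo (0 : ℝ) 1, u' y * u y = v' y * v y := fun y hy => by
    have hy' := Ioo_subset_Icc_self hy
    have heq : (fun t => u t ^ 2) =ᶠ[𝓝 y] fun t => v t ^ 2 := by
      filter_upwards [Ioo_mem_nhds hy.1 hy.2] with t ht using hsq t ht
    have h := ((hu.hasDerivAt y hy').pow 2).unique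
      (((hv.hasDerivAt y hy').pow 2).congr_of_eventuallyEq heq)
    simp only [pow_one, Nat.cast_ofNat, Nat.add_one_sub_one] at h
    linear_combination h / 2
  have hx' := Ioo_subset_Icc_self hx
  have heq : (fun t => u' t * u t) =ᶠ[𝓝 x] fun t => v' t * v t := by
    filter_upwards [Ioo_mem_nhds hx.1 hx.2] with t ht using hderiv t ht
  have hderiv2 := ((hu.hasDerivAt_deriv x hx').mul (hu.hasDerivAt x hx')).unique
    (((hv.hasDerivAt_deriv x hx').mul (hv.hasDerivAt x hx')).congr_of_eventuallyEq heq)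
  refine mul_right_cancel₀ (pow_ne_zero 4 (hne x hx)) ?_
  linear_combination u x ^ 2 * hderiv2 - (u' x * u x + v' x * v x) * hderiv x hx +
    (v' x ^ 2 - r x * u x ^ 2) * hsq x hx

end IsSchrodingerSolution

section DirichletSol

variable {q : ℝ → ℝ} (hq : ContinuousOn q (Icc 0 1))

/-- The coefficient of the first-order system of `φ'' = (q - l) φ` on `[0, 1]`. -/
noncomputable def schrodingerCoeff (l : ℂ) : C(Icc (0 : ℝ) 1, ℂ × ℂ →L[ℂ] ℂ × ℂ) where
  toFun x := schrodingerMatrix (q x - l)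
  continuous_toFun := continuous_schrodingerMatrix.comp
    ((Complex.continuous_ofReal.comp hq.domRestrict).sub continuous_const)

theorem differentiable_schrodingerCoeff : Differentiable ℂ (schrodingerCoeff hq) := by
  have h : schrodingerCoeff hq = fun l => schrodingerCoeff hq 0 -
      l • ContinuousMap.const _ (schrodingerMatrix 1 - schrodingerMatrix 0) := by
    ext l x : 2
    simp only [schrodingerCoeff, schrodingerMatrix, ContinuousMap.coe_mk, ContinuousMap.sub_apply,
      ContinuousMap.smul_apply, ContinuousMap.const_apply]
    module
  have haffine {F : Type} [NormedAddCommGroup F] [NormedSpace ℂ F] (c d : F) :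
      Differentiable ℂ fun l : ℂ => c - l • d := by fun_prop
  exact h ▸ haffine (F := C(Icc (0 : ℝ) 1, ℂ × ℂ →L[ℂ] ℂ × ℂ)) _ _

/-- The solution `φ` of `-φ'' + q φ = l φ` with `φ 0 = 0` and `φ' 0 = 1`. -/
noncomputable def dirichletSol (l : ℂ) (x : ℝ) : ℂ :=
  (linearODESol zero_le_one (schrodingerCoeff hq l) (0, 1) x).1

/-- The derivative in `x` of `dirichletSol hq l x`. -/
noncomputable def dirichletSolDeriv (l : ℂ) (x : ℝ) : ℂ :=
  (linearODESol zero_le_one (schrodingerCoeff hq l) (0, 1) x).2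

theorem dirichletSol_zero (l : ℂ) : dirichletSol hq l 0 = 0 := by
  simp [dirichletSol, linearODESol_left]

theorem dirichletSolDeriv_zero (l : ℂ) : dirichletSolDeriv hq l 0 = 1 := by
  simp [dirichletSolDeriv, linearODESol_left]

theorem isSchrodingerSolution_dirichletSol (l : ℂ) : IsSchrodingerSolution (fun x => q x - l)
    (dirichletSol hq l) (dirichletSolDeriv hq l) := by
  have h (x : ℝ) (hx : x ∈ Icc (0 : ℝ) 1) :=
    hasDerivAt_linearODESol zero_le_one (schrodingerCoeff hq l) (0, 1) ⟨x, hx⟩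
  simp only [schrodingerCoeff, ContinuousMap.coe_mk, schrodingerMatrix_apply] at h
  exact ⟨fun x hx => (h x hx).fst, fun x hx => (h x hx).snd⟩

theorem differentiable_dirichletSol {x : ℝ} (hx : x ∈ Icc (0 : ℝ) 1) :
    Differentiable ℂ fun l => dirichletSol hq l x :=
  ((differentiable_linearODESol (𝕜 := ℂ) (E := ℂ × ℂ) zero_le_one (0, 1) ⟨x, hx⟩).comp
    (differentiable_schrodingerCoeff hq)).fst

theorem continuous_uncurry_dirichletSol : Continuous (Function.uncurry (dirichletSol hq)) :=
  ((continuous_uncurry_linearODESol zero_le_one (0, 1)).comp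
    ((differentiable_schrodingerCoeff hq).continuous.prodMap continuous_id)).fst

include hq in
theorem continuousOn_ofReal_sub_const (l : ℂ) :
    ContinuousOn (fun x => (q x : ℂ) - l) (Icc 0 1) :=
  (Complex.continuous_ofReal.comp_continuousOn hq).sub continuousOn_const

theorem continuous_dirichletSol (l : ℂ) : Continuous (dirichletSol hq l) :=
  (continuous_uncurry_dirichletSol hq).uncurry_left l

theorem dirichletSol_conj (l : ℂ) {x : ℝ} (hx : x ∈ Icc (0 : ℝ) 1) :
    dirichletSol hq (conj l) x = conj (dirichletSol hq l x) := by
  have hstar := (isSchrodingerSolution_dirichletSol hq l).star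
  simp only [map_sub, Complex.conj_ofReal] at hstar
  have h := (hstar.eq_const_mul (isSchrodingerSolution_dirichletSol hq (conj l))
    (continuousOn_ofReal_sub_const hq _) (by simp [dirichletSol_zero])
    (dirichletSol_zero hq _) (dirichletSolDeriv_zero hq _) hx).1
  simpa [dirichletSolDeriv_zero] using h.symm

theorem dirichletSol_wronskian (l m : ℂ) {x : ℝ} (hx : x ∈ Icc (0 : ℝ) 1) :
    dirichletSol hq l x * dirichletSolDeriv hq m x - dirichletSolDeriv hq l x * dirichletSol hq m x
      = (l - m) * ∫ t in 0..x, dirichletSol hq l t * dirichletSol hq m t := by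
  have h := (isSchrodingerSolution_dirichletSol hq l).wronskian_sub_wronskian
    (isSchrodingerSolution_dirichletSol hq m) (continuousOn_ofReal_sub_const hq l)
    (continuousOn_ofReal_sub_const hq m) hx
  simpa only [dirichletSol_zero, zero_mul, mul_zero, sub_zero, sub_sub_sub_cancel_left,
    intervalIntegral.integral_const_mul] using h

theorem integral_norm_sq_dirichletSol_pos (l : ℂ) {x : ℝ} (hx : 0 < x) :
    0 < ∫ t in 0..x, ‖dirichletSol hq l t‖ ^ 2 := by
  refine intervalIntegral.integral_pos hx ((continuous_dirichletSol hq l).norm.pow 2).continuousOn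
    (fun _ _ => by positivity) ?_
  have hderiv := (isSchrodingerSolution_dirichletSol hq l).hasDerivAt 0 (left_mem_Icc.2 zero_le_one)
  rw [dirichletSolDeriv_zero] at hderiv
  obtain ⟨t, ht, htx⟩ := (((hderiv.eventually_ne (c := 0) one_ne_zero).filter_mono
    (nhdsGT_le_nhdsNE 0)).and (Ioc_mem_nhdsGT hx)).exists
  exact ⟨t, Ioc_subset_Icc_self htx, by positivity⟩

theorem dirichletSol_ne_zero {l : ℂ} (hl : l.im ≠ 0) {x : ℝ} (hx : x ∈ Ioc (0 : ℝ) 1) :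
    dirichletSol hq l x ≠ 0 := fun h => by
  have hmem := Ioc_subset_Icc_self hx
  have hint : ∫ t in 0..x, dirichletSol hq l t * dirichletSol hq (conj l) t =
      (∫ t in 0..x, ‖dirichletSol hq l t‖ ^ 2 : ℝ) := by
    rw [← intervalIntegral.integral_ofReal]
    refine intervalIntegral.integral_congr fun t ht => ?_
    rw [uIcc_of_le hx.1.le] at ht
    simp only [dirichletSol_conj hq l (Icc_subset_Icc_right hx.2 ht), Complex.mul_conj']
    norm_cast
  have hw := dirichletSol_wronskian hq l (conj l) hmem
  rw [dirichletSol_conj hq l hmem, h, hint] at hw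
  simp only [zero_mul, map_zero, mul_zero, sub_zero, zero_eq_mul, Complex.ofReal_eq_zero,
    (integral_norm_sq_dirichletSol_pos hq l hx.1).ne', or_false] at hw
  exact hl (Complex.conj_eq_iff_im.1 (sub_eq_zero.1 hw).symm)

theorem ofReal_re_dirichletSol (t : ℝ) {x : ℝ} (hx : x ∈ Icc (0 : ℝ) 1) :
    ((dirichletSol hq t x).re : ℂ) = dirichletSol hq t x := by
  rw [← Complex.conj_eq_iff_re, ← dirichletSol_conj hq _ hx, Complex.conj_ofReal]

theorem exists_eq_ofReal_of_dirichletSol_one_eq_zero {l : ℂ} (hl : dirichletSol hq l 1 = 0) :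
    ∃ t : ℝ, l = t := by
  refine ⟨l.re, (Complex.conj_eq_iff_re.1 (Complex.conj_eq_iff_im.2 ?_)).symm⟩
  by_contra him
  exact dirichletSol_ne_zero hq him (right_mem_Ioc.2 zero_lt_one) hl

theorem isDirichletEigenvalue_iff (t : ℝ) :
    IsDirichletEigenvalue q t ↔ dirichletSol hq t 1 = 0 := by
  have hφ := isSchrodingerSolution_dirichletSol hq t
  constructor
  · rintro ⟨ψ, ψ', hψ, hψ', ⟨x, hx, hne⟩, h0, h1⟩
    have hsol : IsSchrodingerSolution (fun x => q x - t) (fun x => ψ x) fun x => ψ' x :=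
      ⟨fun x hx => (hψ x hx).ofReal_comp, fun x hx => (hψ' x hx).ofReal_comp.congr_deriv (by
        push_cast; ring)⟩
    have hmul {y : ℝ} (hy : y ∈ Icc (0 : ℝ) 1) : (ψ y : ℂ) = ψ' 0 * dirichletSol hq t y :=
      (hsol.eq_const_mul hφ (continuousOn_ofReal_sub_const hq t) (by simp [h0])
        (dirichletSol_zero hq t) (dirichletSolDeriv_zero hq t) hy).1
    have hslope : (ψ' 0 : ℂ) ≠ 0 := fun h => hne (by simpa [h] using hmul hx)
    have hend := hmul (right_mem_Icc.2 zero_le_one)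
    rw [h1, Complex.ofReal_zero] at hend
    exact (mul_eq_zero.1 hend.symm).resolve_left hslope
  · intro h1
    refine ⟨fun x => (dirichletSol hq t x).re, fun x => (dirichletSolDeriv hq t x).re,
      fun x hx => ?_, fun x hx => ?_, ?_, by simp [dirichletSol_zero], by simp [h1]⟩
    · exact Complex.reCLM.hasFDerivAt.comp_hasDerivAt x (hφ.hasDerivAt x hx)
    · refine (Complex.reCLM.hasFDerivAt.comp_hasDerivAt x (hφ.hasDerivAt_deriv x hx)).congr_deriv ?_
      simp [sub_mul]
    · by_contra! hzero
      refine (integral_norm_sq_dirichletSol_pos hq t zero_lt_one).ne' ?_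
      refine (intervalIntegral.integral_congr fun x hx => ?_).trans intervalIntegral.integral_zero
      rw [uIcc_of_le zero_le_one] at hx
      rw [← ofReal_re_dirichletSol hq t hx, hzero x hx, Complex.ofReal_zero, norm_zero, sq,
        zero_mul]

theorem dirichletSolDeriv_one_mul_deriv {l : ℂ} (hl : dirichletSol hq l 1 = 0) :
    dirichletSolDeriv hq l 1 * deriv (fun m => dirichletSol hq m 1) l =
      ∫ t in 0..1, dirichletSol hq l t ^ 2 := by
  have hone : (1 : ℝ) ∈ Icc (0 : ℝ) 1 := right_mem_Icc.2 zero_le_one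
  have hslope := (hasDerivAt_iff_tendsto_slope.1
    (differentiable_dirichletSol hq hone l).hasDerivAt).const_mul (dirichletSolDeriv hq l 1)
  have hcont : Continuous fun m => ∫ t in 0..1, dirichletSol hq l t * dirichletSol hq m t :=
    intervalIntegral.continuous_parametric_intervalIntegral_of_continuous'
      (((continuous_dirichletSol hq l).comp continuous_snd).mul
        (continuous_uncurry_dirichletSol hq)) 0 1
  have hlim := (hcont.tendsto l).mono_left (nhdsWithin_le_nhds (s := {l}ᶜ))
  simp only [← sq] at hlim
  refine tendsto_nhds_unique (hslope.congr' ?_) hlim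
  filter_upwards [self_mem_nhdsWithin] with m hm
  have hw := dirichletSol_wronskian hq l m hone
  have hne : m - l ≠ 0 := sub_ne_zero.2 hm
  rw [hl, zero_mul, zero_sub] at hw
  rw [slope_def_field, hl, sub_zero, mul_div_assoc', div_eq_iff hne]
  linear_combination -hw

theorem exists_pos_dirichletSolDeriv_one_mul_deriv_eq {t : ℝ} (ht : dirichletSol hq t 1 = 0) :
    ∃ r : ℝ, 0 < r ∧
      dirichletSolDeriv hq t 1 * deriv (fun m => dirichletSol hq m 1) t = r := by
  refine ⟨_, integral_norm_sq_dirichletSol_pos hq t zero_lt_one, ?_⟩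
  rw [dirichletSolDeriv_one_mul_deriv hq ht, ← intervalIntegral.integral_ofReal]
  refine intervalIntegral.integral_congr fun x hx => ?_
  rw [uIcc_of_le zero_le_one] at hx
  rw [← ofReal_re_dirichletSol hq t hx, Complex.norm_real, Real.norm_eq_abs, sq_abs,
    Complex.ofReal_pow]

theorem deriv_dirichletSol_one_ne_zero {l : ℂ} (hl : dirichletSol hq l 1 = 0) :
    deriv (fun m => dirichletSol hq m 1) l ≠ 0 := by
  obtain ⟨t, rfl⟩ := exists_eq_ofReal_of_dirichletSol_one_eq_zero hq hl
  obtain ⟨r, hr, h⟩ := exists_pos_dirichletSolDeriv_one_mul_deriv_eq hq hl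
  exact right_ne_zero_of_mul (h ▸ Complex.ofReal_ne_zero.2 hr.ne')

section Symmetric
variable (hsym : ∀ x ∈ Icc (0 : ℝ) 1, q (1 - x) = q x)
include hsym

theorem isSchrodingerSolution_dirichletSol_one_sub (l : ℂ) :
    IsSchrodingerSolution (fun x => q x - l) (fun x => dirichletSol hq l (1 - x))
      fun x => -dirichletSolDeriv hq l (1 - x) :=
  (isSchrodingerSolution_dirichletSol hq l).comp_one_sub.congr fun x hx => by simp only [hsym x hx]

theorem dirichletSol_one_sub_of_one_eq_zero {l : ℂ} (hl : dirichletSol hq l 1 = 0) {x : ℝ}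
    (hx : x ∈ Icc (0 : ℝ) 1) :
    dirichletSol hq l (1 - x) = -dirichletSolDeriv hq l 1 * dirichletSol hq l x ∧
      dirichletSolDeriv hq l (1 - x) = dirichletSolDeriv hq l 1 * dirichletSolDeriv hq l x := by
  have h := (isSchrodingerSolution_dirichletSol_one_sub hq hsym l).eq_const_mul
    (isSchrodingerSolution_dirichletSol hq l) (continuousOn_ofReal_sub_const hq l)
    (by simpa using hl) (dirichletSol_zero hq l) (dirichletSolDeriv_zero hq l) hx
  simpa using h

theorem sq_dirichletSolDeriv_one {l : ℂ} (hl : dirichletSol hq l 1 = 0) :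
    dirichletSolDeriv hq l 1 ^ 2 = 1 := by
  have h := (dirichletSol_one_sub_of_one_eq_zero hq hsym hl (right_mem_Icc.2 zero_le_one)).2
  rw [sub_self, dirichletSolDeriv_zero] at h
  rw [sq, ← h]

theorem dirichletSol_wronskian_one_sub (l : ℂ) {x : ℝ} (hx : x ∈ Icc (0 : ℝ) 1) :
    dirichletSolDeriv hq l x * dirichletSol hq l (1 - x) +
      dirichletSol hq l x * dirichletSolDeriv hq l (1 - x) = dirichletSol hq l 1 := by
  have h := (isSchrodingerSolution_dirichletSol hq l).wronskian_sub_wronskian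
    (isSchrodingerSolution_dirichletSol_one_sub hq hsym l) (continuousOn_ofReal_sub_const hq l)
    (continuousOn_ofReal_sub_const hq l) hx
  simp only [sub_self, zero_mul, intervalIntegral.integral_zero, dirichletSol_zero,
    dirichletSolDeriv_zero, sub_zero] at h
  linear_combination -h

end Symmetric
end DirichletSol

section Sine

theorem norm_sin_sq (z : ℂ) : ‖Complex.sin z‖ ^ 2 = Real.sin z.re ^ 2 + Real.sinh z.im ^ 2 := by
  rw [Complex.sin_eq, ← Complex.ofReal_sin, ← Complex.ofReal_cos, ← Complex.ofReal_cosh,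
    ← Complex.ofReal_sinh, ← Complex.ofReal_mul, ← Complex.ofReal_mul, ← Complex.normSq_eq_norm_sq,
    Complex.normSq_add_mul_I, mul_pow, mul_pow, Real.cosh_sq]
  linear_combination Real.sinh z.im ^ 2 * Real.sin_sq_add_cos_sq z.re

theorem norm_sin_le_exp_abs_im (z : ℂ) : ‖Complex.sin z‖ ≤ Real.exp |z.im| := by
  have hsq : ‖Complex.sin z‖ ^ 2 ≤ Real.cosh z.im ^ 2 := by
    rw [norm_sin_sq, Real.cosh_sq, add_comm]
    gcongr
    exact Real.sin_sq_le_one _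
  have hcosh : Real.cosh z.im ≤ Real.exp |z.im| := by
    have := Real.exp_le_exp.2 (neg_le_abs z.im)
    have := Real.exp_le_exp.2 (le_abs_self z.im)
    rw [Real.cosh_eq]
    linarith
  exact ((pow_le_pow_iff_left₀ (norm_nonneg _) (Real.cosh_pos _).le two_ne_zero).1 hsq).trans hcosh

/-- The region of `ℂ` where `sin` is comparable to its upper bound `exp |im|`, away from its
zeros. -/
def sinLargeSet : Set ℂ := {k | Real.exp |k.im| ≤ 4 * ‖Complex.sin k‖}

theorem mem_sinLargeSet {z : ℂ} : z ∈ sinLargeSet ↔ Real.exp |z.im| ≤ 4 * ‖Complex.sin z‖ :=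
  Iff.rfl

theorem mem_sinLargeSet_of_cos_re_eq_zero {z : ℂ} (hz : Real.cos z.re = 0) : z ∈ sinLargeSet := by
  have hsq : ‖Complex.sin z‖ ^ 2 = Real.cosh |z.im| ^ 2 := by
    rw [norm_sin_sq, Real.sin_sq, hz, Real.cosh_abs, Real.cosh_sq]
    ring
  rw [pow_left_inj₀ (norm_nonneg _) (Real.cosh_pos _).le two_ne_zero, Real.cosh_eq] at hsq
  rw [mem_sinLargeSet, hsq]
  linarith [Real.exp_pos |z.im|, Real.exp_pos (-|z.im|)]

theorem mem_sinLargeSet_of_one_le_abs_im {z : ℂ} (hz : 1 ≤ |z.im|) : z ∈ sinLargeSet := by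
  have hle : Real.sinh |z.im| ≤ ‖Complex.sin z‖ := by
    refine abs_le_of_sq_le_sq' ?_ (norm_nonneg _) |>.2
    rw [norm_sin_sq, ← Real.abs_sinh, sq_abs]
    exact le_add_of_nonneg_left (sq_nonneg _)
  have hexp : 2 ≤ Real.exp |z.im| := by linarith [Real.add_one_le_exp |z.im|]
  have hexp_neg : Real.exp (-|z.im|) ≤ 1 := Real.exp_le_one_iff.2 (by linarith)
  rw [Real.sinh_eq] at hle
  rw [mem_sinLargeSet]
  linarith

theorem abs_re_eq_or_abs_im_eq_of_mem_frontier_square {R : ℝ} (hR : 0 < R) {z : ℂ}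
    (hz : z ∈ frontier (Ioo (-R) R ×ℂ Ioo (-R) R)) : |z.re| = R ∨ |z.im| = R := by
  rw [Complex.frontier_reProdIm, frontier_Ioo (by linarith)] at hz
  simp only [abs_eq hR.le]
  exact hz.symm.imp (fun h => h.1.symm) fun h => h.2.symm

theorem eq_zero_of_tendsto_sinLargeSet {g : ℂ → ℂ} (hg : Differentiable ℂ g)
    (hlim : Tendsto g (cobounded ℂ ⊓ 𝓟 sinLargeSet) (𝓝 0)) (k : ℂ) : g k = 0 := by
  refine norm_le_zero_iff.1 (le_of_forall_pos_le_add fun ε hε => ?_)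
  rw [zero_add]
  have hsmall : ∀ᶠ z in cobounded ℂ, z ∈ sinLargeSet → ‖g z‖ < ε :=
    eventually_inf_principal.1 (hlim.norm.eventually_lt_const (by simpa using hε))
  rw [← comap_norm_atTop, eventually_comap] at hsmall
  obtain ⟨r, hr⟩ := eventually_atTop.1 hsmall
  have hradius : Tendsto (fun n : ℕ => (n : ℝ) * Real.pi + Real.pi / 2) atTop atTop :=
    tendsto_atTop_add_const_right _ _ (tendsto_natCast_atTop_atTop.atTop_mul_const Real.pi_pos)
  obtain ⟨n, hn⟩ := (hradius.eventually_gt_atTop (max (max r 1) ‖k‖)).exists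
  set R := (n : ℝ) * Real.pi + Real.pi / 2
  have hrR : r < R := (le_max_left _ _).trans_lt ((le_max_left _ _).trans_lt hn)
  have hR1 : 1 < R := (le_max_right _ _).trans_lt ((le_max_left _ _).trans_lt hn)
  have hkR : ‖k‖ < R := (le_max_right _ _).trans_lt hn
  have hcos : Real.cos R = 0 := Real.cos_eq_zero_iff.2 ⟨n, by simp only [R]; push_cast; ring⟩
  refine Complex.norm_le_of_forall_mem_frontier_norm_le (U := Ioo (-R) R ×ℂ Ioo (-R) R)
    ((Metric.isBounded_Ioo _ _).reProdIm (Metric.isBounded_Ioo _ _)) hg.diffContOnCl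
    (fun z hz => ?_) (subset_closure ⟨abs_lt.1 ((Complex.abs_re_le_norm k).trans_lt hkR),
      abs_lt.1 ((Complex.abs_im_le_norm k).trans_lt hkR)⟩)
  obtain hre | him := abs_re_eq_or_abs_im_eq_of_mem_frontier_square (by linarith) hz
  · refine (hr ‖z‖ (hrR.le.trans (hre ▸ Complex.abs_re_le_norm z)) z rfl ?_).le
    exact mem_sinLargeSet_of_cos_re_eq_zero (by rw [← Real.cos_abs, hre, hcos])
  · refine (hr ‖z‖ (hrR.le.trans (him ▸ Complex.abs_im_le_norm z)) z rfl ?_).le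
    exact mem_sinLargeSet_of_one_le_abs_im (him ▸ hR1.le)

end Sine

theorem exists_differentiable_eq_mul_of_simple_zeros {f g : ℂ → ℂ} (hf : Differentiable ℂ f)
    (hg : Differentiable ℂ g) (hsimple : ∀ z, g z = 0 → deriv g z ≠ 0)
    (hfg : ∀ z, g z = 0 → f z = 0) : ∃ h : ℂ → ℂ, Differentiable ℂ h ∧ ∀ z, f z = h z * g z := by
  classical
  refine ⟨fun z => if g z = 0 then deriv f z / deriv g z else f z / g z, fun z => ?_, fun z => ?_⟩
  · have hdslope {F : ℂ → ℂ} (hF : Differentiable ℂ F) : Differentiable ℂ (dslope F z) :=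
      differentiableOn_univ.1 ((Complex.differentiableOn_dslope univ_mem).2 hF.differentiableOn)
    by_cases hz : g z = 0
    · have hne : dslope g z z ≠ 0 := dslope_same g z ▸ hsimple z hz
      refine ((hdslope hf z).div (hdslope hg z) hne).congr_of_eventuallyEq ?_
      filter_upwards [(hdslope hg z).continuousAt.eventually_ne hne] with w hw
      rcases eq_or_ne w z with rfl | hwz
      · simp [hz]
      · rw [dslope_of_ne _ hwz, slope_def_field, hz, sub_zero] at hw
        simp only [Pi.div_apply, dslope_of_ne _ hwz, slope_def_field, hz, hfg z hz, sub_zero,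
          (div_ne_zero_iff.1 hw).1, if_false, div_div_div_cancel_right₀ (sub_ne_zero.2 hwz)]
    · refine ((hf z).div (hg z) hz).congr_of_eventuallyEq ?_
      filter_upwards [(hg z).continuousAt.eventually_ne hz] with w hw
      simp [hw]
  · by_cases hz : g z = 0
    · simp [hz, hfg z hz]
    · simp [hz]

section Interpolation

variable {f D : ℂ → ℂ}
  (hDsin : (fun k => k * D (k ^ 2) - Complex.sin k) =O[cobounded ℂ] fun k => Real.exp |k.im| / ‖k‖)
include hDsin

theorem eventually_exp_abs_im_le :
    ∀ᶠ k in cobounded ℂ ⊓ 𝓟 sinLargeSet, Real.exp |k.im| ≤ 8 * ‖k * D (k ^ 2)‖ := by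
  obtain ⟨C, hC, hbound⟩ := hDsin.exists_pos
  refine eventually_inf_principal.2 ?_
  filter_upwards [hbound.bound, tendsto_norm_cobounded_atTop.eventually_ge_atTop (8 * C)]
    with k hk hkC hsin
  have herror : ‖k * D (k ^ 2) - Complex.sin k‖ ≤ Real.exp |k.im| / 8 := by
    refine hk.trans ?_
    have hkpos : 0 < ‖k‖ := by linarith
    rw [norm_div, Real.norm_of_nonneg (Real.exp_pos _).le, norm_norm, mul_div_assoc',
      div_le_iff₀ hkpos]
    nlinarith [Real.exp_pos |k.im|]
  have htri := norm_sub_norm_le (Complex.sin k) (k * D (k ^ 2))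
  rw [norm_sub_rev] at htri
  linarith [mem_sinLargeSet.1 hsin]

theorem eq_zero_of_isBigO_exp_abs_im_div_sq (hf : Differentiable ℂ f) (hD : Differentiable ℂ D)
    (hsimple : ∀ l, D l = 0 → deriv D l ≠ 0) (hzero : ∀ l, D l = 0 → f l = 0)
    (hfbound : (fun k => f (k ^ 2)) =O[cobounded ℂ] fun k => Real.exp |k.im| / ‖k‖ ^ 2) (l : ℂ) :
    f l = 0 := by
  obtain ⟨h, hh, hfh⟩ := exists_differentiable_eq_mul_of_simple_zeros hf hD hsimple hzero
  obtain ⟨k, rfl⟩ := IsAlgClosed.exists_pow_nat_eq l two_pos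
  obtain ⟨C, hC, hbound⟩ := hfbound.exists_pos
  suffices Tendsto (fun k => h (k ^ 2)) (cobounded ℂ ⊓ 𝓟 sinLargeSet) (𝓝 0) by
    have hk := eq_zero_of_tendsto_sinLargeSet (hh.comp (differentiable_pow 2)) this k
    rw [hfh, show h (k ^ 2) = 0 from hk, zero_mul]
  refine squeeze_zero_norm' (a := fun k => 8 * C / ‖k‖) ?_
    ((tendsto_norm_cobounded_atTop.const_div_atTop (8 * C)).mono_left inf_le_left)
  filter_upwards [eventually_exp_abs_im_le hDsin, hbound.bound.filter_mono inf_le_left,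
    (eventually_ne_cobounded (0 : ℂ)).filter_mono inf_le_left] with k hk hfk hk0
  have hkpos : 0 < ‖k‖ := norm_pos_iff.2 hk0
  have hexp := Real.exp_pos |k.im|
  rw [hfh, norm_div, Real.norm_of_nonneg hexp.le, norm_pow, norm_norm, norm_mul] at hfk
  rw [norm_mul] at hk
  refine le_of_mul_le_mul_right ?_ hexp
  calc ‖h (k ^ 2)‖ * Real.exp |k.im| ≤ ‖h (k ^ 2)‖ * (8 * (‖k‖ * ‖D (k ^ 2)‖)) := by gcongr
    _ = 8 * ‖k‖ * (‖h (k ^ 2)‖ * ‖D (k ^ 2)‖) := by ring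
    _ ≤ 8 * ‖k‖ * (C * (Real.exp |k.im| / ‖k‖ ^ 2)) := by gcongr
    _ = 8 * C / ‖k‖ * Real.exp |k.im| := by field_simp

end Interpolation

section Growth

theorem norm_sin_mul_ofReal_le (k : ℂ) {x : ℝ} (hx : 0 ≤ x) :
    ‖Complex.sin (k * x)‖ ≤ Real.exp (|k.im| * x) := by
  refine (norm_sin_le_exp_abs_im _).trans_eq ?_
  rw [Complex.im_mul_ofReal, abs_mul, abs_of_nonneg hx]

variable {q : ℝ → ℝ} (hq : ContinuousOn q (Icc 0 1))

theorem mul_dirichletSol_sq_sub_sin (k : ℂ) {x : ℝ} (hx : x ∈ Icc (0 : ℝ) 1) :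
    k * dirichletSol hq (k ^ 2) x - Complex.sin (k * x) =
      ∫ t in 0..x, q t * (dirichletSol hq (k ^ 2) t * Complex.sin (k * (x - t))) := by
  have harg (t : ℝ) : HasDerivAt (fun t : ℝ => k * ((x : ℂ) - t)) (-k) t :=
    ((((hasDerivAt_id t).ofReal_comp.const_sub (x : ℂ))).const_mul k).congr_deriv (by simp)
  have hsin : IsSchrodingerSolution (fun _ => -k ^ 2) (fun t => Complex.sin (k * (x - t)))
      fun t => -k * Complex.cos (k * (x - t)) :=
    ⟨fun t _ => ((Complex.hasDerivAt_sin _).comp t (harg t)).congr_deriv (mul_comm _ _),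
      fun t _ => (((Complex.hasDerivAt_cos _).comp t (harg t)).const_mul (-k)).congr_deriv (by
        ring)⟩
  have h := (isSchrodingerSolution_dirichletSol hq (k ^ 2)).wronskian_sub_wronskian hsin
    (continuousOn_ofReal_sub_const hq _) continuousOn_const hx
  simp only [sub_self, mul_zero, Complex.cos_zero, Complex.sin_zero, mul_one, dirichletSol_zero,
    dirichletSolDeriv_zero, Complex.ofReal_zero, sub_zero, zero_mul, one_mul, zero_sub,
    sub_neg_eq_add] at h
  rw [← neg_inj, ← intervalIntegral.integral_neg]
  refine Eq.trans (by ring) (h.trans (intervalIntegral.integral_congr fun t _ => ?_))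
  ring

section BoundedPotential

variable {C : ℝ} (hC : ∀ x ∈ Icc (0 : ℝ) 1, ‖q x‖ ≤ C)
include hC

theorem norm_mul_dirichletSol_sq_sub_sin_le {k : ℂ} {M : ℝ}
    (hM : ∀ t ∈ Icc (0 : ℝ) 1, ‖dirichletSol hq (k ^ 2) t‖ ≤ M * Real.exp (|k.im| * t)) {x : ℝ}
    (hx : x ∈ Icc (0 : ℝ) 1) :
    ‖k * dirichletSol hq (k ^ 2) x - Complex.sin (k * x)‖ ≤ C * M * Real.exp (|k.im| * x) := by
  have hC0 : 0 ≤ C := (norm_nonneg _).trans (hC x hx)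
  have hM0 : 0 ≤ M := by simpa [dirichletSol_zero] using hM 0 (left_mem_Icc.2 zero_le_one)
  have hle : ∀ t ∈ uIoc 0 x,
      ‖(q t : ℂ) * (dirichletSol hq (k ^ 2) t * Complex.sin (k * (x - t)))‖ ≤
        C * M * Real.exp (|k.im| * x) := fun t ht => by
    rw [uIoc_of_le hx.1] at ht
    have ht' : t ∈ Icc (0 : ℝ) 1 := ⟨ht.1.le, ht.2.trans hx.2⟩
    have hsin : ‖Complex.sin (k * (x - t))‖ ≤ Real.exp (|k.im| * (x - t)) := by
      simpa using norm_sin_mul_ofReal_le k (sub_nonneg.2 ht.2)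
    calc ‖(q t : ℂ) * (dirichletSol hq (k ^ 2) t * Complex.sin (k * (x - t)))‖
        = ‖q t‖ * (‖dirichletSol hq (k ^ 2) t‖ * ‖Complex.sin (k * (x - t))‖) := by
          rw [norm_mul, norm_mul, Complex.norm_real]
      _ ≤ C * (M * Real.exp (|k.im| * t) * Real.exp (|k.im| * (x - t))) := by
          gcongr
          exacts [hC t ht', hM t ht']
      _ = C * M * Real.exp (|k.im| * x) := by
          rw [mul_assoc M, ← Real.exp_add, ← mul_add, add_sub_cancel, mul_assoc]
  rw [mul_dirichletSol_sq_sub_sin hq k hx]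
  refine (intervalIntegral.norm_integral_le_of_norm_le_const hle).trans ?_
  rw [sub_zero, abs_of_nonneg hx.1]
  exact mul_le_of_le_one_right (by positivity) hx.2

theorem norm_dirichletSol_sq_le {k : ℂ} (hk0 : k ≠ 0) (hk : 2 * C ≤ ‖k‖) {x : ℝ}
    (hx : x ∈ Icc (0 : ℝ) 1) :
    ‖dirichletSol hq (k ^ 2) x‖ ≤ 2 / ‖k‖ * Real.exp (|k.im| * x) := by
  -- The maximum `M` of `‖φ‖ e^{-|Im k| t}` satisfies `‖k‖ M ≤ 1 + C M` by the Duhamel formula.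
  have hcont : Continuous fun t => ‖dirichletSol hq (k ^ 2) t‖ / Real.exp (|k.im| * t) :=
    (continuous_dirichletSol hq _).norm.div (by fun_prop) fun t => (Real.exp_pos _).ne'
  obtain ⟨y, hy, hmax⟩ := isCompact_Icc.exists_isMaxOn ⟨x, hx⟩ hcont.continuousOn
  set M := ‖dirichletSol hq (k ^ 2) y‖ / Real.exp (|k.im| * y) with hMdef
  have hM : ∀ t ∈ Icc (0 : ℝ) 1, ‖dirichletSol hq (k ^ 2) t‖ ≤ M * Real.exp (|k.im| * t) :=
    fun t ht => (div_le_iff₀ (Real.exp_pos _)).1 (hmax ht)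
  have hMk : ‖k‖ * M * Real.exp (|k.im| * y) ≤ (1 + C * M) * Real.exp (|k.im| * y) := by
    have htri := norm_sub_norm_le (k * dirichletSol hq (k ^ 2) y) (Complex.sin (k * y))
    have hduhamel := norm_mul_dirichletSol_sq_sub_sin_le hq hC hM hy
    rw [hMdef, mul_assoc, div_mul_cancel₀ _ (Real.exp_pos _).ne', ← hMdef, ← norm_mul]
    linarith [norm_sin_mul_ofReal_le k hy.1]
  have hMle : M ≤ 2 / ‖k‖ := by
    have hM0 : 0 ≤ M := by positivity
    rw [le_div_iff₀ (norm_pos_iff.2 hk0)]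
    nlinarith [le_of_mul_le_mul_right hMk (Real.exp_pos _)]
  exact (hM x hx).trans (by gcongr)

end BoundedPotential

theorem dirichletSol_sq_isBigO {x : ℝ} (hx : x ∈ Icc (0 : ℝ) 1) :
    (fun k => dirichletSol hq (k ^ 2) x) =O[cobounded ℂ]
      fun k => Real.exp (|k.im| * x) / ‖k‖ := by
  obtain ⟨C, hC⟩ := isCompact_Icc.exists_bound_of_continuousOn hq
  refine .of_bound 2 ?_
  filter_upwards [eventually_ne_cobounded 0,
    tendsto_norm_cobounded_atTop.eventually_ge_atTop (2 * C)] with k hk0 hk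
  rw [Real.norm_of_nonneg (by positivity)]
  exact (norm_dirichletSol_sq_le hq hC hk0 hk hx).trans_eq (by ring)

theorem mul_dirichletSol_sq_sub_sin_isBigO {x : ℝ} (hx : x ∈ Icc (0 : ℝ) 1) :
    (fun k => k * dirichletSol hq (k ^ 2) x - Complex.sin (k * x)) =O[cobounded ℂ]
      fun k => Real.exp (|k.im| * x) / ‖k‖ := by
  obtain ⟨C, hC⟩ := isCompact_Icc.exists_bound_of_continuousOn hq
  refine .of_bound (2 * C) ?_
  filter_upwards [eventually_ne_cobounded 0,
    tendsto_norm_cobounded_atTop.eventually_ge_atTop (2 * C)] with k hk0 hk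
  rw [Real.norm_of_nonneg (by positivity)]
  exact (norm_mul_dirichletSol_sq_sub_sin_le hq hC
    (fun t ht => norm_dirichletSol_sq_le hq hC hk0 hk ht) hx).trans_eq (by ring)

end Growth

section Uniqueness

variable {q1 q2 : ℝ → ℝ} (hq1 : ContinuousOn q1 (Icc 0 1)) (hq2 : ContinuousOn q2 (Icc 0 1))

theorem mul_dirichletSol_sq_one_sub_sin_isBigO :
    (fun k => k * dirichletSol hq1 (k ^ 2) 1 - Complex.sin k) =O[cobounded ℂ]
      fun k => Real.exp |k.im| / ‖k‖ := by
  simpa using mul_dirichletSol_sq_sub_sin_isBigO hq1 (right_mem_Icc.2 zero_le_one)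

theorem dirichletSol_one_eq_of_zeros (hzero : ∀ l, dirichletSol hq1 l 1 = 0 →
    dirichletSol hq2 l 1 = 0) (l : ℂ) : dirichletSol hq1 l 1 = dirichletSol hq2 l 1 := by
  have hone : (1 : ℝ) ∈ Icc (0 : ℝ) 1 := right_mem_Icc.2 zero_le_one
  have hsin := mul_dirichletSol_sq_one_sub_sin_isBigO hq1
  refine (sub_eq_zero.1 (eq_zero_of_isBigO_exp_abs_im_div_sq hsin
    ((differentiable_dirichletSol hq2 hone).sub (differentiable_dirichletSol hq1 hone))
    (differentiable_dirichletSol hq1 hone) (fun _ => deriv_dirichletSol_one_ne_zero hq1)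
    (fun l hl => by simp [hl, hzero l hl]) ?_ l)).symm
  have hinv : (fun k : ℂ => k⁻¹) =O[cobounded ℂ] fun k => ‖k‖⁻¹ :=
    (Asymptotics.isBigO_refl _ _).norm_right.congr_right fun _ => norm_inv _
  refine (hinv.mul ((mul_dirichletSol_sq_one_sub_sin_isBigO hq2).sub hsin)).congr' ?_
    (.of_eq (funext fun k => by rw [sq, inv_mul_eq_div, div_div]))
  filter_upwards [eventually_ne_cobounded 0] with k hk
  rw [sub_sub_sub_cancel_right, ← mul_sub, inv_mul_cancel_left₀ hk, Pi.sub_apply]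

variable {hq1 hq2} (hsym1 : ∀ x ∈ Icc (0 : ℝ) 1, q1 (1 - x) = q1 x)
  (hsym2 : ∀ x ∈ Icc (0 : ℝ) 1, q2 (1 - x) = q2 x)
  (hone : ∀ l, dirichletSol hq1 l 1 = dirichletSol hq2 l 1)
include hsym1 hsym2 hone

theorem dirichletSolDeriv_one_eq {l : ℂ} (hl : dirichletSol hq1 l 1 = 0) :
    dirichletSolDeriv hq1 l 1 = dirichletSolDeriv hq2 l 1 := by
  obtain ⟨t, rfl⟩ := exists_eq_ofReal_of_dirichletSol_one_eq_zero hq1 hl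
  have hl2 := (hone t).symm.trans hl
  obtain ⟨r, hr, h1⟩ := exists_pos_dirichletSolDeriv_one_mul_deriv_eq hq1 hl
  obtain ⟨s, hs, h2⟩ := exists_pos_dirichletSolDeriv_one_mul_deriv_eq hq2 hl2
  rw [funext hone] at h1
  refine (sq_eq_sq_iff_eq_or_eq_neg.1 ((sq_dirichletSolDeriv_one hq1 hsym1 hl).trans
    (sq_dirichletSolDeriv_one hq2 hsym2 hl2).symm)).resolve_right fun hneg => ?_
  rw [hneg, neg_mul, h2] at h1
  have h : -s = r := by exact_mod_cast h1
  linarith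

theorem dirichletSol_mul_one_sub_eq (l : ℂ) {x : ℝ} (hx : x ∈ Icc (0 : ℝ) 1) :
    dirichletSol hq1 l x * dirichletSol hq2 l (1 - x) =
      dirichletSol hq1 l (1 - x) * dirichletSol hq2 l x := by
  have hx' := Icc.one_sub_mem hx
  have hone_mem : (1 : ℝ) ∈ Icc (0 : ℝ) 1 := right_mem_Icc.2 zero_le_one
  have hexp (k : ℂ) : Real.exp (|k.im| * x) / ‖k‖ * (Real.exp (|k.im| * (1 - x)) / ‖k‖) =
      Real.exp |k.im| / ‖k‖ ^ 2 := by
    rw [div_mul_div_comm, ← Real.exp_add, ← mul_add, add_sub_cancel, mul_one, sq]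
  refine sub_eq_zero.1 (eq_zero_of_isBigO_exp_abs_im_div_sq
    (mul_dirichletSol_sq_one_sub_sin_isBigO hq1)
    (((differentiable_dirichletSol hq1 hx).mul (differentiable_dirichletSol hq2 hx')).sub
      ((differentiable_dirichletSol hq1 hx').mul (differentiable_dirichletSol hq2 hx)))
    (differentiable_dirichletSol hq1 hone_mem) (fun _ => deriv_dirichletSol_one_ne_zero hq1)
    (fun l hl => ?_) (.sub ?_ ?_) l)
  · simp only [Pi.sub_apply, Pi.mul_apply,
      (dirichletSol_one_sub_of_one_eq_zero hq1 hsym1 hl hx).1,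
      (dirichletSol_one_sub_of_one_eq_zero hq2 hsym2 ((hone l).symm.trans hl) hx).1,
      dirichletSolDeriv_one_eq hsym1 hsym2 hone hl]
    ring
  · exact ((dirichletSol_sq_isBigO hq1 hx).mul (dirichletSol_sq_isBigO hq2 hx')).congr_right hexp
  · exact ((dirichletSol_sq_isBigO hq1 hx').mul (dirichletSol_sq_isBigO hq2 hx)).congr_right
      fun k => (mul_comm _ _).trans (hexp k)

theorem sq_dirichletSol_eq {l : ℂ} (hl : dirichletSol hq1 l 1 ≠ 0) {x : ℝ}
    (hx : x ∈ Ioo (0 : ℝ) 1) :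
    dirichletSol hq1 l x ^ 2 = dirichletSol hq2 l x ^ 2 := by
  have hx' := Ioo_subset_Icc_self hx
  have hφ1 := isSchrodingerSolution_dirichletSol hq1 l
  have hφ2 := isSchrodingerSolution_dirichletSol hq2 l
  have hφ1r := isSchrodingerSolution_dirichletSol_one_sub hq1 hsym1 l
  have hφ2r := isSchrodingerSolution_dirichletSol_one_sub hq2 hsym2 l
  have hprod {t : ℝ} := dirichletSol_mul_one_sub_eq hsym1 hsym2 hone l (x := t)
  have heq : (fun t => dirichletSol hq1 l t * dirichletSol hq2 l (1 - t)) =ᶠ[𝓝 x]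
      fun t => dirichletSol hq1 l (1 - t) * dirichletSol hq2 l t := by
    filter_upwards [Icc_mem_nhds hx.1 hx.2] with t ht using hprod ht
  have hderiv := ((hφ1.hasDerivAt x hx').mul (hφ2r.hasDerivAt x hx')).unique
    (((hφ1r.hasDerivAt x hx').mul (hφ2.hasDerivAt x hx')).congr_of_eventuallyEq heq)
  have hw1 := dirichletSol_wronskian_one_sub hq1 hsym1 l hx'
  have hw2 := dirichletSol_wronskian_one_sub hq2 hsym2 l hx'
  rw [← hone] at hw2
  refine mul_left_cancel₀ hl ?_
  linear_combination dirichletSol hq2 l x ^ 2 * hw1 - dirichletSol hq1 l x ^ 2 * hw2 -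
    dirichletSol hq1 l x * dirichletSol hq2 l x * hderiv +
    (dirichletSolDeriv hq1 l x * dirichletSol hq2 l x +
      dirichletSol hq1 l x * dirichletSolDeriv hq2 l x) * hprod hx'

theorem eqOn_of_dirichletSol_one_eq : EqOn q1 q2 (Icc 0 1) := by
  have him : Complex.I.im ≠ 0 := by simp
  have hIoo : EqOn q1 q2 (Ioo 0 1) := fun x hx => by
    have h := (isSchrodingerSolution_dirichletSol hq1 Complex.I).eqOn_of_sq_eq
      (isSchrodingerSolution_dirichletSol hq2 Complex.I)
      (fun y hy => sq_dirichletSol_eq hsym1 hsym2 hone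
        (dirichletSol_ne_zero hq1 him (right_mem_Ioc.2 zero_lt_one)) hy)
      (fun y hy => dirichletSol_ne_zero hq1 him (Ioo_subset_Ioc_self hy)) hx
    simpa using h
  exact hIoo.of_subset_closure hq1 hq2 Ioo_subset_Icc_self (closure_Ioo zero_ne_one).ge

end Uniqueness

theorem one_sub_eq_of_half_add_eq_half_sub {α : Type*} {q : ℝ → α}
    (hsym : ∀ x ∈ Icc (0 : ℝ) (1 / 2), q (1 / 2 + x) = q (1 / 2 - x)) :
    ∀ x ∈ Icc (0 : ℝ) 1, q (1 - x) = q x := fun x hx => by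
  rcases le_total x (1 / 2) with h | h
  · convert hsym (1 / 2 - x) ⟨by linarith, by linarith [hx.1]⟩ using 2 <;> ring
  · convert (hsym (x - 1 / 2) ⟨by linarith, by linarith [hx.2]⟩).symm using 2 <;> ring

theorem spectrum_determines_symmetric_potential_general
    (q1 q2 : ℝ → ℝ)
    (hq1 : ContinuousOn q1 (Icc 0 1)) (hq2 : ContinuousOn q2 (Icc 0 1))
    (hsym1 : ∀ x ∈ Icc (0 : ℝ) (1 / 2), q1 (1 / 2 + x) = q1 (1 / 2 - x))
    (hsym2 : ∀ x ∈ Icc (0 : ℝ) (1 / 2), q2 (1 / 2 + x) = q2 (1 / 2 - x))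
    (hspec : {lam : ℝ | IsDirichletEigenvalue q1 lam}
        ⊆ {lam : ℝ | IsDirichletEigenvalue q2 lam}) :
    ∀ x ∈ Icc (0 : ℝ) 1, q1 x = q2 x := by
  have hzero (l : ℂ) (hl : dirichletSol hq1 l 1 = 0) : dirichletSol hq2 l 1 = 0 := by
    obtain ⟨t, rfl⟩ := exists_eq_ofReal_of_dirichletSol_one_eq_zero hq1 hl
    exact (isDirichletEigenvalue_iff hq2 t).1 (hspec ((isDirichletEigenvalue_iff hq1 t).2 hl))
  exact eqOn_of_dirichletSol_one_eq (one_sub_eq_of_half_add_eq_half_sub hsym1)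
    (one_sub_eq_of_half_add_eq_half_sub hsym2) (dirichletSol_one_eq_of_zeros hq1 hq2 hzero)

/-- two continuous potentials, both symmetric about `x = 1/2`, with the
same set of Dirichlet eigenvalues, coincide on `[0,1]`. -/
theorem spectrum_determines_symmetric_potential
    (q1 q2 : ℝ → ℝ)
    (hq1 : ContinuousOn q1 (Set.Icc 0 1)) (hq2 : ContinuousOn q2 (Set.Icc 0 1))
    (hsym1 : ∀ x ∈ Set.Icc (0:ℝ) (1/2), q1 (1/2 + x) = q1 (1/2 - x))
    (hsym2 : ∀ x ∈ Set.Icc (0:ℝ) (1/2), q2 (1/2 + x) = q2 (1/2 - x))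
    (hspec : {lam : ℝ | IsDirichletEigenvalue q1 lam}
        = {lam : ℝ | IsDirichletEigenvalue q2 lam}) :
    ∀ x ∈ Set.Icc (0:ℝ) 1, q1 x = q2 x :=
  spectrum_determines_symmetric_potential_general q1 q2 hq1 hq2 hsym1 hsym2 hspec.subset
end
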